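/- arXiv:2604.23468 — 7 statements merged into one kernel-verified Lean document; each statement's English description precedes it below -/
import Mathlib

section
/- The function b : ℝ⁸ → ℂ is a radial Schwartz function and is a −1-eigenfunction of the Fourier transform on ℝ⁸: b̂ = −b, where b̂(ξ) = ∫_{ℝ⁸} b(x) e^{−2πi⟨x,ξ⟩} dx. -/
/-!
Write `b` as a combination of integrals `∫ g(t) e^{πi‖x‖² z(t)} dt` of Gaussians. Near the cusp
`s ∈ {-1, 1, 0}` the integrand `ψS(-1/(z - s)) (z - s)² e^{πi‖x‖²z}` is holomorphic and bounded on
the disc `{Im (-1/(z - s)) > 9/20}`, which is tangent to the real line at `s`. It therefore has a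
primitive there that extends continuously to `s` (`exists_primitive`), and the contour from `s` to
`i` may be deformed inside the disc to the image of a vertical ray `Re τ = σ` under
`z = s - 1/τ`, where `σ = -1/2`, `1/2`, `0` for `s = -1`, `1`, `0`. This is `funB_eq_gaussInt`.

The Fourier transform on `ℝ⁸` sends `e^{πi‖x‖²z}` to `z⁻⁴ e^{πi‖ξ‖²(-1/z)}`. With the chosen
paths, `z ↦ -1/z` exchanges the first two paths, on which `ψS(τ + 1) = -ψS(τ)` accounts for the
sign, and exchanges the path from `0` to `i` with the ray from `i` to `i∞`. Hence the transform
permutes the four integrals up to sign, giving `b̂ = -b`; no inversion formula for the theta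
functions is needed.

The Schwartz property holds for each of the four integrals separately (`GaussData.schwartz`): the
weight decays exponentially in `t`, because `ψS(τ) = O(e^{-π Im τ})` (`psi_bound`), and the path
approaches the real line only like `1/t`.
-/

open Complex

/-- The normalized weight-2 Eisenstein series `E₂` on the upper half-plane (constant term 1),
given by its `q`-expansion `1 - 24 ∑ σ₁(n) qⁿ`, extended by the same formula to all of `ℂ`. -/
noncomputable def E₂ (z : ℂ) : ℂ :=
  1 - 24 * ∑' n : ℕ+, (ArithmeticFunction.sigma 1 (n : ℕ) : ℂ) *
    Complex.exp (2 * Real.pi * I * (n : ℕ) * z)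

/-- The normalized weight-4 Eisenstein series `E₄` (constant term 1),
given by its `q`-expansion `1 + 240 ∑ σ₃(n) qⁿ`. -/
noncomputable def E₄ (z : ℂ) : ℂ :=
  1 + 240 * ∑' n : ℕ+, (ArithmeticFunction.sigma 3 (n : ℕ) : ℂ) *
    Complex.exp (2 * Real.pi * I * (n : ℕ) * z)

/-- The normalized weight-6 Eisenstein series `E₆` (constant term 1),
given by its `q`-expansion `1 - 504 ∑ σ₅(n) qⁿ`. -/
noncomputable def E₆ (z : ℂ) : ℂ :=
  1 - 504 * ∑' n : ℕ+, (ArithmeticFunction.sigma 5 (n : ℕ) : ℂ) *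
    Complex.exp (2 * Real.pi * I * (n : ℕ) * z)

/-- The modular discriminant `Δ = (E₄³ - E₆²) / 1728`. -/
noncomputable def Δ (z : ℂ) : ℂ := (E₄ z ^ 3 - E₆ z ^ 2) / 1728

/-- Viazovska's weakly holomorphic quasimodular form `φ₀ = (E₂E₄ - E₆)² / Δ`. -/
noncomputable def φ₀ (z : ℂ) : ℂ := (E₂ z * E₄ z - E₆ z) ^ 2 / Δ z

/-- The Jacobi theta-nullwert `θ₀₀(z) = ∑_{n ∈ ℤ} e^{πin²z}`. -/
noncomputable def θ₀₀ (z : ℂ) : ℂ := ∑' n : ℤ, Complex.exp (Real.pi * I * (n : ℂ) ^ 2 * z)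

/-- The Jacobi theta-nullwert `θ₀₁(z) = ∑_{n ∈ ℤ} (-1)ⁿ e^{πin²z}`. -/
noncomputable def θ₀₁ (z : ℂ) : ℂ :=
  ∑' n : ℤ, (-1 : ℂ) ^ n * Complex.exp (Real.pi * I * (n : ℂ) ^ 2 * z)

/-- The Jacobi theta-nullwert `θ₁₀(z) = ∑_{n ∈ ℤ} e^{πi(n+1/2)²z}`. -/
noncomputable def θ₁₀ (z : ℂ) : ℂ :=
  ∑' n : ℤ, Complex.exp (Real.pi * I * ((n : ℂ) + 1 / 2) ^ 2 * z)

/-- Viazovska's modular form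
`ψ_S = 128((θ₀₁⁴ - θ₁₀⁴)/θ₀₀⁸ - (θ₁₀⁴ + θ₀₀⁴)/θ₀₁⁸)`. -/
noncomputable def ψS (z : ℂ) : ℂ :=
  128 * ((θ₀₁ z ^ 4 - θ₁₀ z ^ 4) / θ₀₀ z ^ 8 - (θ₁₀ z ^ 4 + θ₀₀ z ^ 4) / θ₀₁ z ^ 8)

open scoped Real

/-- The complex line integral of `f` along the straight segment from `w₁` to `w₂`. -/
noncomputable def segInt (f : ℂ → ℂ) (w₁ w₂ : ℂ) : ℂ :=
  (w₂ - w₁) * ∫ t in (0 : ℝ)..1, f (w₁ + (t : ℂ) * (w₂ - w₁))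

/-- The complex line integral of `f` along the vertical ray on the imaginary axis
from `c * i` to `i∞`, parametrized as `t ↦ t * i`. -/
noncomputable def imAxisRayInt (f : ℂ → ℂ) (c : ℝ) : ℂ :=
  ∫ t in Set.Ioi c, f ((t : ℂ) * I) * I

/-- The Gaussian kernel `e^{πi‖x‖²z}` appearing in the integrands. -/
noncomputable def ker (x : EuclideanSpace ℝ (Fin 8)) (z : ℂ) : ℂ :=
  Complex.exp (Real.pi * I * (‖x‖ : ℂ) ^ 2 * z)

/-- Viazovska's function `a : ℝ⁸ → ℂ`, defined by contour integrals of `φ₀`: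
the first contour runs from `-1` vertically to `-1 + i` then horizontally to `i`, the second
from `1` vertically to `1 + i` then horizontally to `i`, the third along the imaginary axis
from `0` to `i`, and the fourth along the imaginary axis from `i` to `i∞`. -/
noncomputable def funA (x : EuclideanSpace ℝ (Fin 8)) : ℂ :=
  (segInt (fun z => φ₀ (-1 / (z + 1)) * (z + 1) ^ 2 * ker x z) (-1) (-1 + I) +
    segInt (fun z => φ₀ (-1 / (z + 1)) * (z + 1) ^ 2 * ker x z) (-1 + I) I) +
  (segInt (fun z => φ₀ (-1 / (z - 1)) * (z - 1) ^ 2 * ker x z) 1 (1 + I) +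
    segInt (fun z => φ₀ (-1 / (z - 1)) * (z - 1) ^ 2 * ker x z) (1 + I) I) -
  2 * segInt (fun z => φ₀ (-1 / z) * z ^ 2 * ker x z) 0 I +
  2 * imAxisRayInt (fun z => φ₀ z * ker x z) 1

/-- Viazovska's function `b : ℝ⁸ → ℂ`, defined by contour integrals of `ψ_S` along the same
contours as `funA`, with a minus sign on the ray from `i` to `i∞`. -/
noncomputable def funB (x : EuclideanSpace ℝ (Fin 8)) : ℂ :=
  (segInt (fun z => ψS (-1 / (z + 1)) * (z + 1) ^ 2 * ker x z) (-1) (-1 + I) +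
    segInt (fun z => ψS (-1 / (z + 1)) * (z + 1) ^ 2 * ker x z) (-1 + I) I) +
  (segInt (fun z => ψS (-1 / (z - 1)) * (z - 1) ^ 2 * ker x z) 1 (1 + I) +
    segInt (fun z => ψS (-1 / (z - 1)) * (z - 1) ^ 2 * ker x z) (1 + I) I) -
  2 * segInt (fun z => ψS (-1 / z) * z ^ 2 * ker x z) 0 I -
  2 * imAxisRayInt (fun z => ψS z * ker x z) 1

open scoped FourierTransform

section

open Set MeasureTheory Filter Topology
open scoped ContDiff Nat

/-! ### Theta functions and `ψS` high in the half-plane -/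

lemma theta00_eq (z : ℂ) : θ₀₀ z = jacobiTheta z := rfl

lemma theta01_eq (z : ℂ) : θ₀₁ z = jacobiTheta (z + 1) := by
  unfold θ₀₁ jacobiTheta
  refine tsum_congr fun n => ?_
  have h : Complex.exp (π * I * (n : ℂ) ^ 2) = (-1 : ℂ) ^ n := by
    have h1 : (π * I * (n : ℂ) ^ 2 : ℂ) = ((n ^ 2 : ℤ) : ℂ) * (π * I) := by push_cast; ring
    rw [h1, Complex.exp_int_mul, Complex.exp_pi_mul_I]
    rcases Int.even_or_odd n with hn | hn
    · rw [hn.neg_one_zpow, (hn.pow_of_ne_zero two_ne_zero).neg_one_zpow]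
    · rw [hn.neg_one_zpow, (hn.pow).neg_one_zpow]
  rw [← h, ← Complex.exp_add]
  congr 1; ring

lemma theta10_eq (z : ℂ) : θ₁₀ z = Complex.exp (π * I * z / 4) * jacobiTheta₂ (z / 2) z := by
  unfold θ₁₀ jacobiTheta₂ jacobiTheta₂_term
  rw [← tsum_mul_left]
  refine tsum_congr fun n => ?_
  rw [← Complex.exp_add]
  congr 1; ring

lemma theta00_add_one (z : ℂ) : θ₀₀ (z + 1) = θ₀₁ z := by rw [theta01_eq, theta00_eq]

lemma theta01_add_one (z : ℂ) : θ₀₁ (z + 1) = θ₀₀ z := by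
  rw [theta01_eq, theta00_eq, ← jacobiTheta_two_add z]; congr 1; ring

lemma theta10_add_one (z : ℂ) : θ₁₀ (z + 1) ^ 4 = -θ₁₀ z ^ 4 := by
  have h : θ₁₀ (z + 1) = Complex.exp (π * I / 4) * θ₁₀ z := by
    unfold θ₁₀
    rw [← tsum_mul_left]
    refine tsum_congr fun n => ?_
    rw [← Complex.exp_add]
    obtain ⟨m, hm⟩ := (Int.even_mul_succ_self n)
    rw [Complex.exp_eq_exp_iff_exists_int]
    refine ⟨m, ?_⟩
    have hm' : (n : ℂ) * (n + 1) = m + m := by exact_mod_cast hm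
    linear_combination (π * I) * hm'
  rw [h, mul_pow, ← Complex.exp_nat_mul]
  have : ((4 : ℕ) : ℂ) * (π * I / 4) = π * I := by push_cast; ring
  rw [this, Complex.exp_pi_mul_I]; ring

/-- `z ↦ z + 1` swaps `θ₀₀` and `θ₀₁` and changes the sign of `θ₁₀ ^ 4`. -/
lemma psi_add_one (z : ℂ) : ψS (z + 1) = -ψS z := by
  unfold ψS
  rw [theta00_add_one, theta01_add_one, theta10_add_one]; ring

/-- The height `9/20` lies just above `2 log 2 / π ≈ 0.441`, and this is what keeps the theta
functions `θ₀₀`, `θ₀₁` away from zero. -/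
lemma exp_bound {y : ℝ} (hy : 9 / 20 < y) : Real.exp (-π * y) ≤ 1 / 4 := by
  have h1 : Real.exp (-π * y) ≤ Real.exp (-(2 * Real.log 2)) := by
    apply Real.exp_le_exp.2
    nlinarith [Real.pi_gt_three, Real.pi_gt_d2, Real.log_two_lt_d9]
  have h2 : Real.exp (-(2 * Real.log 2)) = 1 / 4 := by
    rw [Real.exp_neg, two_mul, Real.exp_add, Real.exp_log two_pos]; norm_num
  exact h1.trans h2.le

lemma jacobi_bounds {z : ℂ} (hz : 9 / 20 < z.im) :
    ‖jacobiTheta z - 1‖ ≤ 3 * Real.exp (-π * z.im) ∧ 1 / 4 ≤ ‖jacobiTheta z‖ ∧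
      ‖jacobiTheta z‖ ≤ 2 := by
  have hq := exp_bound hz
  have hq0 := Real.exp_pos (-π * z.im)
  have h := norm_jacobiTheta_sub_one_le (τ := z) (by linarith)
  set q := Real.exp (-π * z.im)
  have h1 : 2 / (1 - q) * q ≤ 3 * q := by
    gcongr
    rw [div_le_iff₀ (by linarith)]; linarith
  have h2 := h.trans h1
  have h3 := norm_sub_norm_le (1 : ℂ) (1 - jacobiTheta z)
  have h4 := norm_add_le (1 : ℂ) (jacobiTheta z - 1)
  rw [norm_sub_rev 1 (jacobiTheta z)] at h3
  simp only [sub_sub_cancel, add_sub_cancel, norm_one] at h3 h4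
  exact ⟨h2, by linarith, by linarith⟩

lemma theta00_bounds {z : ℂ} (hz : 9 / 20 < z.im) :
    ‖θ₀₀ z - 1‖ ≤ 3 * Real.exp (-π * z.im) ∧ 1 / 4 ≤ ‖θ₀₀ z‖ ∧ ‖θ₀₀ z‖ ≤ 2 :=
  jacobi_bounds hz

lemma theta01_bounds {z : ℂ} (hz : 9 / 20 < z.im) :
    ‖θ₀₁ z - 1‖ ≤ 3 * Real.exp (-π * z.im) ∧ 1 / 4 ≤ ‖θ₀₁ z‖ ∧ ‖θ₀₁ z‖ ≤ 2 := by
  have := jacobi_bounds (z := z + 1) (by simpa using hz)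
  simpa [← theta01_eq] using this

/-- All terms of the theta series in `θ₁₀ z = e^{πiz/4} ∑ e^{πi(n² + n)z}` are dominated by their
values at height `9/20`, so that the decay comes from the prefactor. -/
lemma theta10_bound : ∃ M : ℝ, ∀ z : ℂ, 9 / 20 < z.im →
    ‖θ₁₀ z ^ 4‖ ≤ M * Real.exp (-π * z.im) := by
  set w : ℂ := (9 / 20 : ℝ) * I with hw
  have hsum : Summable fun n : ℤ => ‖jacobiTheta₂_term n (w / 2) w‖ :=
    ((summable_jacobiTheta₂_term_iff (w / 2) w).2 (by simp [hw])).norm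
  set S := ∑' n : ℤ, ‖jacobiTheta₂_term n (w / 2) w‖
  refine ⟨S ^ 4, fun z hz => ?_⟩
  have h1 : ‖jacobiTheta₂ (z / 2) z‖ ≤ S := by
    refine tsum_of_norm_bounded hsum.hasSum fun n => ?_
    rw [norm_jacobiTheta₂_term, norm_jacobiTheta₂_term]
    apply Real.exp_le_exp.2
    have hn : (0 : ℝ) ≤ n ^ 2 + n := by
      have : (0 : ℤ) ≤ n ^ 2 + n := by
        rcases le_or_gt 0 n with h | h
        · positivity
        · nlinarith
      exact_mod_cast this
    have hwi : w.im = 9 / 20 := by simp [hw]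
    have e1 : (z / 2).im = z.im / 2 := by simp
    have e2 : (w / 2).im = w.im / 2 := by simp
    rw [e1, e2, hwi]
    nlinarith [mul_nonneg (mul_nonneg Real.pi_pos.le hn) (sub_nonneg.2 hz.le)]
  rw [theta10_eq, mul_pow, norm_mul, norm_pow, norm_pow, mul_comm, Complex.norm_exp,
    ← Real.exp_nat_mul]
  have e : ((4 : ℕ) : ℝ) * (π * I * z / 4).re = -π * z.im := by
    have : (π * I * z / 4) = ((-π * z.im / 4 : ℝ) : ℂ) + ((π * z.re / 4 : ℝ) : ℂ) * I := by
      apply Complex.ext <;> simp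
    rw [this]; simp; ring
  rw [e]
  gcongr

lemma psi_differentiableAt {z : ℂ} (hz : 9 / 20 < z.im) : DifferentiableAt ℂ ψS z := by
  have hz0 : 0 < z.im := by linarith
  have h00 : DifferentiableAt ℂ θ₀₀ z := differentiableAt_jacobiTheta hz0
  have h01 : DifferentiableAt ℂ θ₀₁ z := by
    rw [funext theta01_eq]
    exact DifferentiableAt.comp z (f := fun z => z + 1)
      (differentiableAt_jacobiTheta (by simpa using hz0)) (by fun_prop)
  have h10 : DifferentiableAt ℂ θ₁₀ z := by
    rw [funext theta10_eq]
    refine DifferentiableAt.mul (by fun_prop) ?_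
    exact DifferentiableAt.comp z (f := fun z : ℂ => (z / 2, z))
      (g := fun p : ℂ × ℂ => jacobiTheta₂ p.1 p.2)
      (hasFDerivAt_jacobiTheta₂ (z / 2) hz0).differentiableAt (by fun_prop)
  have n00 : θ₀₀ z ^ 8 ≠ 0 := pow_ne_zero _ (norm_pos_iff.1 (by linarith [(theta00_bounds hz).2.1]))
  have n01 : θ₀₁ z ^ 8 ≠ 0 := pow_ne_zero _ (norm_pos_iff.1 (by linarith [(theta01_bounds hz).2.1]))
  unfold ψS
  fun_prop (disch := assumption)

/-- Exponential decay of `ψS`: the part without `θ₁₀` is `128 (θ₀₁¹² - θ₀₀¹²) / (θ₀₀ θ₀₁)⁸`,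
whose numerator is divisible by `(θ₀₁ - 1) - (θ₀₀ - 1)`. -/
lemma psi_bound : ∃ C : ℝ, 0 ≤ C ∧ ∀ z : ℂ, 9 / 20 < z.im →
    ‖ψS z‖ ≤ C * Real.exp (-π * z.im) := by
  obtain ⟨M, hM⟩ := theta10_bound
  have hM0 : 0 ≤ M := by
    have := (norm_nonneg _).trans (hM I (by norm_num))
    exact nonneg_of_mul_nonneg_left this (Real.exp_pos _)
  refine ⟨128 * (6 * (12 * 2 ^ 11) * 4 ^ 16 + 2 * M * 4 ^ 8), by positivity, fun z hz => ?_⟩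
  obtain ⟨c1, c2, c3⟩ := theta00_bounds hz
  obtain ⟨a1, a2, a3⟩ := theta01_bounds hz
  have b1 := hM z hz
  have hq := Real.exp_pos (-π * z.im)
  unfold ψS
  set q := Real.exp (-π * z.im)
  set a := θ₀₁ z
  set c := θ₀₀ z
  set b := θ₁₀ z ^ 4
  have ha : a ≠ 0 := norm_pos_iff.1 (by linarith)
  have hc : c ≠ 0 := norm_pos_iff.1 (by linarith)
  have hdec : 128 * ((a ^ 4 - b) / c ^ 8 - (b + c ^ 4) / a ^ 8) =
      128 * ((∑ i ∈ Finset.range 12, a ^ i * c ^ (12 - 1 - i)) * ((a - 1) - (c - 1)) *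
        ((a⁻¹) ^ 8 * (c⁻¹) ^ 8) - b * ((c⁻¹) ^ 8 + (a⁻¹) ^ 8)) := by
    have : (a - 1) - (c - 1) = a - c := by ring
    rw [this, geom_sum₂_mul]
    field_simp
    ring
  have ia : ‖(a⁻¹) ^ 8‖ ≤ 4 ^ 8 := by
    rw [norm_pow, norm_inv]; gcongr
    rw [inv_le_comm₀ (by linarith) (by norm_num)]; linarith
  have ic : ‖(c⁻¹) ^ 8‖ ≤ 4 ^ 8 := by
    rw [norm_pow, norm_inv]; gcongr
    rw [inv_le_comm₀ (by linarith) (by norm_num)]; linarith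
  have hs : ‖∑ i ∈ Finset.range 12, a ^ i * c ^ (12 - 1 - i)‖ ≤ 12 * 2 ^ 11 := by
    have hb : ∀ i ∈ Finset.range 12, ‖a ^ i * c ^ (12 - 1 - i)‖ ≤ (2 : ℝ) ^ 11 := by
      intro i hi
      have hi' : i < 12 := by simpa using hi
      rw [norm_mul, norm_pow, norm_pow]
      calc ‖a‖ ^ i * ‖c‖ ^ (12 - 1 - i) ≤ 2 ^ i * 2 ^ (12 - 1 - i) := by gcongr
        _ = 2 ^ 11 := by rw [← pow_add]; congr 1; omega
    refine (norm_sum_le_of_le _ hb).trans ?_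
    simp
  have hd : ‖(a - 1) - (c - 1)‖ ≤ 6 * q := (norm_sub_le _ _).trans (by linarith)
  rw [hdec, norm_mul]
  have e128 : ‖(128 : ℂ)‖ = 128 := by simp
  rw [e128]
  have key : ‖(∑ i ∈ Finset.range 12, a ^ i * c ^ (12 - 1 - i)) * ((a - 1) - (c - 1)) *
        ((a⁻¹) ^ 8 * (c⁻¹) ^ 8) - b * ((c⁻¹) ^ 8 + (a⁻¹) ^ 8)‖ ≤
      (12 * 2 ^ 11) * (6 * q) * (4 ^ 8 * 4 ^ 8) + (M * q) * (4 ^ 8 + 4 ^ 8) := by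
    refine (norm_sub_le _ _).trans ?_
    rw [norm_mul, norm_mul, norm_mul, norm_mul]
    gcongr
    exact (norm_add_le _ _).trans (add_le_add ic ia)
  calc _ ≤ 128 * ((12 * 2 ^ 11) * (6 * q) * (4 ^ 8 * 4 ^ 8) + (M * q) * (4 ^ 8 + 4 ^ 8)) := by
        gcongr
    _ = _ := by ring

/-! ### Superpositions of Gaussians -/

/-- Conditions on a weight `g` and a path `z` in the upper half-plane, both parametrized by
`t > c`, under which the superposition `∫ g(t) e^{πi‖x‖² z(t)} dt` of Gaussians is a Schwartz
function. The weight decays like `e^{-πt}`, and `z` may approach the real line, but not faster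
than `1 / t`. The bound `(z t).im ≤ K + t` keeps the integral convergent when `‖x‖²` is
replaced by a real variable `r > -1/2`, so that smoothness can be checked on an open set
containing `[0, ∞)`. -/
structure GaussData (c : ℝ) (g z : ℝ → ℂ) : Prop where
  hc : 1 / 2 ≤ c
  g_cont : ContinuousOn g (Ioi c)
  z_cont : ContinuousOn z (Ioi c)
  g_bound : ∃ C, 0 ≤ C ∧ ∀ t, c < t → ‖g t‖ ≤ C * Real.exp (-π * t)
  z_im : ∃ a, 0 < a ∧ ∀ t, c < t → a / t ≤ (z t).im
  z_bound : ∃ K, 0 ≤ K ∧ ∀ t, c < t → ‖z t‖ ≤ K * t ∧ (z t).im ≤ K + t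

/-- The `n`-th derivative in `r` of `∫ g(t) e^{πi r z(t)} dt`, written as an integral. -/
noncomputable def gaussProfile (c : ℝ) (g z : ℝ → ℂ) (n : ℕ) (r : ℝ) : ℂ :=
  ∫ t in Ioi c, g t * (π * I * z t) ^ n * cexp (π * I * r * z t)

/-- The superposition of Gaussians `∫ g(t) e^{πi‖x‖² z(t)} dt`. -/
noncomputable def gaussInt (c : ℝ) (g z : ℝ → ℂ) (x : EuclideanSpace ℝ (Fin 8)) : ℂ :=
  ∫ t in Ioi c, g t * _root_.ker x (z t)

lemma gaussInt_eq (c : ℝ) (g z : ℝ → ℂ) (x : EuclideanSpace ℝ (Fin 8)) :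
    gaussInt c g z x = gaussProfile c g z 0 (‖x‖ ^ 2) := by
  simp [gaussInt, gaussProfile, _root_.ker]

lemma norm_gauss (r : ℝ) (z : ℂ) : ‖cexp (π * I * r * z)‖ = Real.exp (-π * r * z.im) := by
  rw [Complex.norm_exp]; congr 1; simp

lemma integrableOn_pow_mul_exp {c b : ℝ} (hc : 1 / 2 ≤ c) (hb : 0 < b) (n : ℕ) :
    IntegrableOn (fun t : ℝ => t ^ n * Real.exp (-b * t)) (Ioi c) := by
  have h := integrableOn_rpow_mul_exp_neg_mul_rpow (p := 1) (s := n) (b := b)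
    (by have : (0 : ℝ) ≤ n := n.cast_nonneg
        linarith) one_pos hb
  simp only [Real.rpow_natCast, Real.rpow_one] at h
  exact h.mono_set (Ioi_subset_Ioi (by linarith))

namespace GaussData
variable {c : ℝ} {g z : ℝ → ℂ}

lemma pos (h : GaussData c g z) {t : ℝ} (ht : c < t) : 0 < t := by linarith [h.hc]

lemma im_pos (h : GaussData c g z) {t : ℝ} (ht : c < t) : 0 < (z t).im := by
  obtain ⟨a, ha, h1⟩ := h.z_im
  exact (div_pos ha (h.pos ht)).trans_le (h1 t ht)

lemma cont (h : GaussData c g z) (n : ℕ) (r : ℝ) :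
    ContinuousOn (fun t => g t * (π * I * z t) ^ n * cexp (π * I * r * z t)) (Ioi c) := by
  have h1 := h.g_cont
  have h2 := h.z_cont
  fun_prop

lemma meas (h : GaussData c g z) (n : ℕ) (r : ℝ) :
    AEStronglyMeasurable (fun t => g t * (π * I * z t) ^ n * cexp (π * I * r * z t))
      (volume.restrict (Ioi c)) :=
  (h.cont n r).aestronglyMeasurable measurableSet_Ioi

/-- The integrand of `gaussProfile` is dominated uniformly for `r > -1/2`; the weight `e^{-πt}`
absorbs the growth `e^{πt/2}` of the Gaussian at negative `r`. -/
lemma dom (h : GaussData c g z) (n : ℕ) : ∃ B : ℝ, ∀ t, c < t → ∀ r : ℝ, -(1 / 2) < r →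
    ‖g t * (π * I * z t) ^ n * cexp (π * I * r * z t)‖ ≤
      B * (t ^ n * Real.exp (-(π / 2) * t)) := by
  obtain ⟨C, hC, h1⟩ := h.g_bound
  obtain ⟨K, hK, h2⟩ := h.z_bound
  refine ⟨C * (π * K) ^ n * Real.exp (π / 2 * K), fun t ht r hr => ?_⟩
  have ht0 := h.pos ht
  have him := h.im_pos ht
  have e1 : ‖(π * I * z t : ℂ)‖ ≤ π * (K * t) := by
    rw [norm_mul, norm_mul, Complex.norm_I, mul_one, Complex.norm_real, Real.norm_eq_abs,
      abs_of_pos Real.pi_pos]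
    gcongr
    exact (h2 t ht).1
  have e2 : Real.exp (-π * r * (z t).im) ≤ Real.exp (π / 2 * (K + t)) := by
    apply Real.exp_le_exp.2
    have h3 := (h2 t ht).2
    have h4 : -r * (z t).im ≤ 1 / 2 * (K + t) := by nlinarith
    nlinarith [Real.pi_pos]
  rw [norm_mul, norm_mul, norm_pow, norm_gauss]
  calc _ ≤ (C * Real.exp (-π * t)) * (π * (K * t)) ^ n * Real.exp (π / 2 * (K + t)) := by
        gcongr
        exact h1 t ht
    _ = C * (π * K) ^ n * t ^ n * (Real.exp (-π * t) * Real.exp (π / 2 * (K + t))) := by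
        rw [← mul_assoc, mul_pow]; ring
    _ = C * (π * K) ^ n * t ^ n * (Real.exp (π / 2 * K) * Real.exp (-(π / 2) * t)) := by
        rw [← Real.exp_add, ← Real.exp_add]; congr 2; ring
    _ = _ := by ring

lemma integrable (h : GaussData c g z) (n : ℕ) {r : ℝ} (hr : -(1 / 2) < r) :
    IntegrableOn (fun t => g t * (π * I * z t) ^ n * cexp (π * I * r * z t)) (Ioi c) := by
  obtain ⟨B, hB⟩ := h.dom n
  refine ((integrableOn_pow_mul_exp h.hc (by positivity : 0 < π / 2) n).const_mul B).mono'
    (h.meas n r) ?_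
  filter_upwards [ae_restrict_mem measurableSet_Ioi] with t ht
  exact hB t ht r hr

lemma hasDerivAt (h : GaussData c g z) (n : ℕ) {r : ℝ} (hr : -(1 / 2) < r) :
    HasDerivAt (gaussProfile c g z n) (gaussProfile c g z (n + 1) r) r := by
  obtain ⟨B, hB⟩ := h.dom (n + 1)
  refine (hasDerivAt_integral_of_dominated_loc_of_deriv_le
    (F' := fun r t => g t * (π * I * z t) ^ (n + 1) * cexp (π * I * r * z t)) (Ioi_mem_nhds hr)
    (Eventually.of_forall fun r => h.meas n r) (h.integrable n hr) (h.meas (n + 1) r)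
    ?_ ((integrableOn_pow_mul_exp h.hc (by positivity : 0 < π / 2) (n + 1)).const_mul B) ?_).2
  · filter_upwards [ae_restrict_mem measurableSet_Ioi] with t ht s hs
    exact hB t ht s hs
  · filter_upwards [ae_restrict_mem measurableSet_Ioi] with t ht s hs
    have h1 : HasDerivAt (fun s : ℝ => (π * I * s * z t : ℂ)) (π * I * 1 * z t) s :=
      ((Complex.ofRealCLM.hasDerivAt (x := s)).const_mul (π * I : ℂ)).mul_const (z t)
    refine ((h1.cexp).const_mul (g t * (π * I * z t) ^ n)).congr_deriv ?_
    ring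

lemma iteratedDerivWithin (h : GaussData c g z) (n : ℕ) :
    EqOn (iteratedDerivWithin n (gaussProfile c g z 0) (Ioi (-(1 / 2))))
      (gaussProfile c g z n) (Ioi (-(1 / 2))) := by
  induction n with
  | zero => intro r _; simp
  | succ n ih =>
    intro r hr
    rw [iteratedDerivWithin_succ, derivWithin_congr ih (ih hr)]
    exact ((h.hasDerivAt n hr).hasDerivWithinAt).derivWithin
      (isOpen_Ioi.uniqueDiffOn r hr)

lemma contDiffOn (h : GaussData c g z) :
    ContDiffOn ℝ ∞ (gaussProfile c g z 0) (Ioi (-(1 / 2))) := by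
  refine contDiffOn_of_differentiableOn_deriv fun m _ => ?_
  refine DifferentiableOn.congr (f := gaussProfile c g z m) ?_ (h.iteratedDerivWithin m)
  intro r hr
  exact (h.hasDerivAt m hr).differentiableAt.differentiableWithinAt

/-- Rapid decay of all derivatives of the profile: since `Im z(t) ≥ a / t`, each power of `r` is
absorbed by the Gaussian at the cost of the same power of `t`. -/
lemma decay (h : GaussData c g z) (n k : ℕ) : ∃ B : ℝ, 0 ≤ B ∧ ∀ r : ℝ, 0 ≤ r →
    r ^ k * ‖gaussProfile c g z n r‖ ≤ B := by
  obtain ⟨C, hC, h1⟩ := h.g_bound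
  obtain ⟨K, hK, h2⟩ := h.z_bound
  obtain ⟨a, ha, h3⟩ := h.z_im
  set D : ℝ := C * (π * K) ^ n * (k ! / (π * a) ^ k)
  have hint := (integrableOn_pow_mul_exp h.hc Real.pi_pos (n + k)).const_mul D
  refine ⟨∫ t in Ioi c, D * (t ^ (n + k) * Real.exp (-π * t)), ?_, fun r hr => ?_⟩
  · refine setIntegral_nonneg measurableSet_Ioi fun t ht => ?_
    have := h.pos ht
    positivity
  rw [gaussProfile]
  have e0 : r ^ k * ‖∫ t in Ioi c, g t * (π * I * z t) ^ n * cexp (π * I * r * z t)‖ =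
      ‖∫ t in Ioi c, (r ^ k : ℝ) • (g t * (π * I * z t) ^ n * cexp (π * I * r * z t))‖ := by
    rw [integral_smul, norm_smul, Real.norm_of_nonneg (by positivity)]
  rw [e0]
  refine norm_integral_le_of_norm_le hint ?_
  filter_upwards [ae_restrict_mem measurableSet_Ioi] with t ht
  have ht0 := h.pos ht
  have e1 : ‖(π * I * z t : ℂ)‖ ≤ π * (K * t) := by
    rw [norm_mul, norm_mul, Complex.norm_I, mul_one, Complex.norm_real, Real.norm_eq_abs,
      abs_of_pos Real.pi_pos]
    gcongr
    exact (h2 t ht).1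
  have e2 : r ^ k * Real.exp (-π * r * (z t).im) ≤ k ! * (t / (π * a)) ^ k := by
    have h4 : Real.exp (-π * r * (z t).im) ≤ Real.exp (-(π * r * a / t)) := by
      apply Real.exp_le_exp.2
      have := mul_le_mul_of_nonneg_left (h3 t ht) (by positivity : 0 ≤ π * r)
      rw [mul_div_assoc]; linarith
    have h5 := Real.pow_div_factorial_le_exp (x := π * r * a / t) (by positivity) k
    have h6 : r ^ k = (π * r * a / t) ^ k * (t / (π * a)) ^ k := by
      rw [← mul_pow]; congr 1; field_simp
    calc _ ≤ r ^ k * Real.exp (-(π * r * a / t)) := by gcongr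
      _ = (π * r * a / t) ^ k / k ! * Real.exp (-(π * r * a / t)) * (k ! * (t / (π * a)) ^ k) := by
          rw [h6]; field_simp
      _ ≤ Real.exp (π * r * a / t) * Real.exp (-(π * r * a / t)) * (k ! * (t / (π * a)) ^ k) := by
          gcongr
      _ = _ := by rw [← Real.exp_add]; simp
  rw [norm_smul, Real.norm_of_nonneg (by positivity : 0 ≤ r ^ k), norm_mul, norm_mul, norm_pow,
    norm_gauss]
  calc _ = ‖g t‖ * ‖(π * I * z t : ℂ)‖ ^ n * (r ^ k * Real.exp (-π * r * (z t).im)) := by ring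
    _ ≤ (C * Real.exp (-π * t)) * (π * (K * t)) ^ n * (k ! * (t / (π * a)) ^ k) := by
        gcongr
        exact h1 t ht
    _ = D * (t ^ (n + k) * Real.exp (-π * t)) := by
        simp only [D]
        rw [← mul_assoc π K t, mul_pow (π * K), div_pow, pow_add]; ring

/-- The profile is smooth near `[0, ∞)` with rapidly decaying derivatives, and `‖x‖²` has
temperate growth; Faà di Bruno bounds the derivatives of the composite. -/
lemma schwartz (h : GaussData c g z) :
    ∃ B : SchwartzMap (EuclideanSpace ℝ (Fin 8)) ℂ, ⇑B = gaussInt c g z := by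
  have hfun : gaussInt c g z =
      gaussProfile c g z 0 ∘ (fun x : EuclideanSpace ℝ (Fin 8) => ‖x‖ ^ 2) :=
    funext fun x => gaussInt_eq c g z x
  have hrange : ∀ x : EuclideanSpace ℝ (Fin 8), ‖x‖ ^ 2 ∈ Ioi (-(1 / 2) : ℝ) := fun x => by
    have : 0 ≤ ‖x‖ ^ 2 := by positivity
    simp only [mem_Ioi]; linarith
  refine ⟨⟨gaussInt c g z, ?_, fun k n => ?_⟩, rfl⟩
  · rw [hfun]
    exact h.contDiffOn.comp_contDiff (contDiff_norm_sq ℝ) hrange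
  · obtain ⟨m, A, hA, hD⟩ :=
      (Function.hasTemperateGrowth_norm_sq (H := EuclideanSpace ℝ (Fin 8))).norm_iteratedFDeriv_le_uniform n
    -- Each of the at most `n` derivatives of `‖x‖²` in Faà di Bruno's formula costs a factor
    -- `(1 + ‖x‖) ^ m`, so the profile has to absorb the power `N` of `1 + ‖x‖`.
    set N := k + m * n with hN
    have hdec : ∀ i, ∃ B : ℝ, 0 ≤ B ∧ ∀ x : EuclideanSpace ℝ (Fin 8),
        (1 + ‖x‖) ^ N * ‖gaussProfile c g z i (‖x‖ ^ 2)‖ ≤ B := by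
      intro i
      obtain ⟨B0, hB0, h0⟩ := h.decay i 0
      obtain ⟨B1, hB1, h1⟩ := h.decay i N
      refine ⟨2 ^ N * (B0 + B1), by positivity, fun x => ?_⟩
      have q0 := h0 (‖x‖ ^ 2) (by positivity)
      have q1 := h1 (‖x‖ ^ 2) (by positivity)
      have hpow : (1 + ‖x‖) ^ N ≤ 2 ^ N * (1 + (‖x‖ ^ 2) ^ N) := by
        rcases le_total ‖x‖ 1 with hx | hx
        · calc (1 + ‖x‖) ^ N ≤ 2 ^ N := by gcongr; linarith
            _ ≤ _ := le_mul_of_one_le_right (by positivity)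
                (le_add_of_nonneg_right (by positivity))
        · calc (1 + ‖x‖) ^ N ≤ (2 * ‖x‖ ^ 2) ^ N := by gcongr; nlinarith
            _ = 2 ^ N * (‖x‖ ^ 2) ^ N := mul_pow _ _ _
            _ ≤ _ := by gcongr; linarith
      calc _ ≤ 2 ^ N * (1 + (‖x‖ ^ 2) ^ N) * ‖gaussProfile c g z i (‖x‖ ^ 2)‖ := by gcongr
        _ = 2 ^ N * ((‖x‖ ^ 2) ^ 0 * ‖gaussProfile c g z i (‖x‖ ^ 2)‖ +
            (‖x‖ ^ 2) ^ N * ‖gaussProfile c g z i (‖x‖ ^ 2)‖) := by ring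
        _ ≤ _ := by gcongr
    choose B hB0 hB using hdec
    set S := ∑ i ∈ Finset.range (n + 1), B i with hS
    have hS0 : 0 ≤ S := Finset.sum_nonneg fun i _ => hB0 i
    refine ⟨n ! * S * (1 + A) ^ n, fun x => ?_⟩
    have hx1 : (0 : ℝ) < 1 + ‖x‖ := by positivity
    have key := norm_iteratedFDeriv_comp_le' (𝕜 := ℝ) (n := n) (N := ∞)
      (g := gaussProfile c g z 0) (f := fun x : EuclideanSpace ℝ (Fin 8) => ‖x‖ ^ 2)
      (t := Ioi (-(1 / 2))) (by rintro _ ⟨y, rfl⟩; exact hrange y) isOpen_Ioi.uniqueDiffOn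
      h.contDiffOn (contDiff_norm_sq ℝ) (by exact_mod_cast le_top) x
      (C := S / (1 + ‖x‖) ^ N) (D := (1 + A) * (1 + ‖x‖) ^ m) ?_ ?_
    · rw [← hfun] at key
      calc _ ≤ (1 + ‖x‖) ^ k * (n ! * (S / (1 + ‖x‖) ^ N) * ((1 + A) * (1 + ‖x‖) ^ m) ^ n) := by
            gcongr
            linarith
        _ = _ := by
            rw [hN, pow_add, pow_mul, mul_pow]; field_simp
    · intro i hi
      rw [norm_iteratedFDerivWithin_eq_norm_iteratedDerivWithin,
        h.iteratedDerivWithin i (hrange x), le_div_iff₀ (by positivity), mul_comm]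
      exact (hB i x).trans
        (Finset.single_le_sum (fun i _ => hB0 i) (Finset.mem_range.2 (by omega)))
    · intro i hi hin
      have h1 : 1 ≤ (1 + A) * (1 + ‖x‖) ^ m := by
        have : 1 ≤ (1 + ‖x‖) ^ m := one_le_pow₀ (by linarith [norm_nonneg x])
        nlinarith
      calc _ ≤ A * (1 + ‖x‖) ^ m := hD i hin x
        _ ≤ (1 + A) * (1 + ‖x‖) ^ m := by gcongr; linarith
        _ ≤ _ := le_self_pow₀ h1 (by omega)

/-- In dimension 8 the Fourier transform of `e^{πi‖x‖²z}` is `z⁻⁴ e^{πi‖ξ‖²(-1/z)}`, and Fubini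
applies to the superposition. -/
lemma fourier (h : GaussData c g z) :
    𝓕 (gaussInt c g z) = gaussInt c (fun t => g t * (z t ^ 4)⁻¹) (fun t => -1 / z t) := by
  ext w
  rw [Real.fourier_eq']
  simp only [gaussInt, smul_eq_mul]
  simp_rw [← integral_const_mul]
  rw [integral_integral_swap]
  · refine setIntegral_congr_fun measurableSet_Ioi fun t ht => ?_
    have him := h.im_pos ht
    have hz0 : z t ≠ 0 := fun h0 => by simp [h0] at him
    have hre : 0 < (-(π * I * z t)).re := by simpa using mul_pos Real.pi_pos him
    have key := fourier_gaussian_innerProductSpace (V := EuclideanSpace ℝ (Fin 8)) hre w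
    rw [Real.fourier_eq'] at key
    have e1 : (∫ v : EuclideanSpace ℝ (Fin 8), cexp (↑(-2 * π * inner ℝ v w) * I) *
        (g t * _root_.ker v (z t))) = g t * ∫ v : EuclideanSpace ℝ (Fin 8),
          cexp (↑(-2 * π * inner ℝ v w) * I) • cexp (-(-(π * I * z t)) * ‖v‖ ^ 2) := by
      rw [← integral_const_mul]
      congr 1; ext v
      rw [smul_eq_mul, _root_.ker, neg_neg]
      have : (π * I * z t * ‖v‖ ^ 2 : ℂ) = π * I * ‖v‖ ^ 2 * z t := by ring
      rw [this]; ring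
    have hpi : (π : ℂ) ≠ 0 := by exact_mod_cast Real.pi_ne_zero
    have hpow : ((π : ℂ) / -(π * I * z t)) ^
        ((Module.finrank ℝ (EuclideanSpace ℝ (Fin 8)) : ℂ) / 2) = (z t ^ 4)⁻¹ := by
      have : ((Module.finrank ℝ (EuclideanSpace ℝ (Fin 8)) : ℂ) / 2) = ((4 : ℕ) : ℂ) := by
        simp; norm_num
      rw [this, Complex.cpow_natCast, mul_assoc, ← mul_neg, ← div_div, div_self hpi, one_div,
        inv_pow, neg_pow, mul_pow, I_pow_four]
      norm_num
    have hker : cexp (-(π : ℂ) ^ 2 * ‖w‖ ^ 2 / -(π * I * z t)) = _root_.ker w (-1 / z t) := by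
      rw [_root_.ker]
      congr 1
      field_simp
      rw [I_sq]; ring
    rw [e1, key, hpow, hker, mul_assoc]
  · rw [← integrable_swap_iff]
    have hg := h.g_cont.aestronglyMeasurable (μ := volume) measurableSet_Ioi
    have hz := h.z_cont.aestronglyMeasurable (μ := volume) measurableSet_Ioi
    have hmeas : AEStronglyMeasurable (fun p : ℝ × EuclideanSpace ℝ (Fin 8) =>
        cexp (↑(-2 * π * inner ℝ p.2 w) * I) * (g p.1 * _root_.ker p.2 (z p.1)))
        ((volume.restrict (Ioi c)).prod volume) := by
      have hg' := hg.comp_fst (ν := (volume : Measure (EuclideanSpace ℝ (Fin 8))))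
      have hz' := hz.comp_fst (ν := (volume : Measure (EuclideanSpace ℝ (Fin 8))))
      refine AEStronglyMeasurable.mul (Continuous.aestronglyMeasurable (by fun_prop))
        (hg'.mul ?_)
      refine Complex.continuous_exp.comp_aestronglyMeasurable (AEStronglyMeasurable.mul
        (Continuous.aestronglyMeasurable (by fun_prop)) hz')
    have hnorm : ∀ (t : ℝ) (v : EuclideanSpace ℝ (Fin 8)),
        ‖cexp (↑(-2 * π * inner ℝ v w) * I) * (g t * _root_.ker v (z t))‖ =
          ‖g t‖ * Real.exp (-(π * (z t).im) * ‖v‖ ^ 2) := by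
      intro t v
      rw [norm_mul, norm_mul, Complex.norm_exp_ofReal_mul_I, one_mul, _root_.ker]
      have := norm_gauss (‖v‖ ^ 2) (z t)
      push_cast at this
      rw [this]
      congr 2; ring
    obtain ⟨C, hC, h1⟩ := h.g_bound
    obtain ⟨a, ha, h3⟩ := h.z_im
    have hgauss : ∀ t, c < t → (∫ v : EuclideanSpace ℝ (Fin 8),
        Real.exp (-(π * (z t).im) * ‖v‖ ^ 2)) = (1 / (z t).im) ^ 4 := by
      intro t ht
      have him := h.im_pos ht
      rw [GaussianFourier.integral_rexp_neg_mul_sq_norm (by positivity)]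
      have : ((Module.finrank ℝ (EuclideanSpace ℝ (Fin 8)) : ℝ) / 2) = ((4 : ℕ) : ℝ) := by
        simp; norm_num
      rw [this, Real.rpow_natCast]
      congr 1; field_simp
    have hswap := (integrable_prod_iff hmeas).2 ⟨?_, ?_⟩
    · exact hswap
    · filter_upwards [ae_restrict_mem measurableSet_Ioi,
        hmeas.prodMk_left] with t ht hm
      have him := h.im_pos ht
      refine (integrable_norm_iff hm).1 ?_
      simp only [hnorm]
      refine Integrable.const_mul ?_ _
      -- A non-integrable function would have integral `0`, but this integral is positive.
      by_contra hcon
      have := hgauss t ht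
      rw [integral_undef hcon] at this
      exact absurd this (by positivity)
    · refine ((integrableOn_pow_mul_exp h.hc Real.pi_pos 4).const_mul (C * (1 / a) ^ 4)).mono'
        hmeas.norm.integral_prod_right' ?_
      filter_upwards [ae_restrict_mem measurableSet_Ioi] with t ht
      have him := h.im_pos ht
      have ht0 := h.pos ht
      simp only [hnorm]
      rw [integral_const_mul, hgauss t ht, Real.norm_of_nonneg (by positivity)]
      have h4 : 1 / (z t).im ≤ t / a := by
        have := one_div_le_one_div_of_le (by positivity) (h3 t ht)
        rwa [one_div_div] at this
      calc _ ≤ (C * Real.exp (-π * t)) * (t / a) ^ 4 := by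
            gcongr
            exact h1 t ht
        _ = _ := by ring

end GaussData

/-! ### Primitives near a cusp and deformation of contours -/

/-- The open disc tangent to the real line at `s`, of radius `10/9`: the set of all `z` with
`Im (-1 / (z - s)) > 9/20`. -/
def horoball (s : ℝ) : Set ℂ := Metric.ball (s + (10 / 9 : ℝ) * I) (10 / 9)

lemma mem_horoball {s : ℝ} {z : ℂ} :
    z ∈ horoball s ↔ normSq (z - s) < 20 / 9 * z.im := by
  rw [horoball, Metric.mem_ball, dist_eq_norm, ← sq_lt_sq₀ (norm_nonneg _) (by norm_num),
    ← normSq_eq_norm_sq, normSq_apply, normSq_apply]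
  simp only [sub_re, sub_im, add_re, add_im, mul_re, mul_im, I_re, I_im, ofReal_re, ofReal_im]
  constructor <;> intro h <;> nlinarith

lemma horoball_sub_ne_zero {s : ℝ} {z : ℂ} (hz : z ∈ horoball s) : z - s ≠ 0 := by
  intro h
  have h1 := mem_horoball.1 hz
  have h2 : z.im = 0 := by simpa using congrArg Complex.im h
  rw [h, h2] at h1
  simp at h1

lemma horoball_im {s : ℝ} {z : ℂ} (hz : z ∈ horoball s) : 0 < z.im := by
  have h1 := mem_horoball.1 hz
  have := normSq_nonneg (z - s)
  linarith

lemma horoball_neg_inv_im {s : ℝ} {z : ℂ} (hz : z ∈ horoball s) :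
    9 / 20 < (-1 / (z - s)).im := by
  have h0 := normSq_pos.2 (horoball_sub_ne_zero hz)
  have h1 := mem_horoball.1 hz
  have : (-1 / (z - s)).im = z.im / normSq (z - s) := by
    rw [neg_div, one_div, neg_im, inv_im]; simp; ring
  rw [this, lt_div_iff₀ h0]
  linarith

/-- The integrand of the contour integral that starts at the cusp `s`. -/
noncomputable def cuspIntegrand (s : ℝ) (x : EuclideanSpace ℝ (Fin 8)) (z : ℂ) : ℂ :=
  ψS (-1 / (z - s)) * (z - s) ^ 2 * _root_.ker x z

lemma cuspIntegrand_differentiableOn (s : ℝ) (x : EuclideanSpace ℝ (Fin 8)) :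
    DifferentiableOn ℂ (cuspIntegrand s x) (horoball s) := by
  intro z hz
  have h0 := horoball_sub_ne_zero hz
  have h1 : DifferentiableAt ℂ (ψS ∘ fun z : ℂ => -1 / (z - s)) z :=
    DifferentiableAt.comp z (psi_differentiableAt (horoball_neg_inv_im hz))
      ((differentiableAt_const _).div (differentiableAt_id.sub_const _) h0)
  have h2 : DifferentiableAt ℂ (_root_.ker x) z := by
    unfold _root_.ker; fun_prop
  have h3 : DifferentiableAt ℂ (fun z : ℂ => (z - s) ^ 2) z := by fun_prop
  exact ((h1.mul h3).mul h2).differentiableWithinAt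

lemma cuspIntegrand_bound (s : ℝ) (x : EuclideanSpace ℝ (Fin 8)) :
    ∃ M : ℝ, 0 ≤ M ∧ ∀ z ∈ horoball s, ‖cuspIntegrand s x z‖ ≤ M := by
  obtain ⟨C, hC, h⟩ := psi_bound
  refine ⟨C * 1 * (20 / 9) ^ 2 * 1, by positivity, fun z hz => ?_⟩
  have him := horoball_im hz
  have h1 := horoball_neg_inv_im hz
  have h2 : ‖z - s‖ ≤ 20 / 9 := by
    have h3 := mem_horoball.1 hz
    have h4 : z.im ≤ ‖z - s‖ := by
      have := (le_abs_self _).trans (Complex.abs_im_le_norm (z - s))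
      simpa using this
    rw [normSq_eq_norm_sq] at h3
    nlinarith [norm_nonneg (z - s)]
  rw [cuspIntegrand, norm_mul, norm_mul, norm_pow]
  have h5 : ‖_root_.ker x z‖ ≤ 1 := by
    have := norm_gauss (‖x‖ ^ 2) z
    push_cast at this
    rw [_root_.ker, this, Real.exp_le_one_iff]
    have : 0 ≤ π * ‖x‖ ^ 2 * z.im := by positivity
    linarith
  have h6 : Real.exp (-π * (-1 / (z - s)).im) ≤ 1 := by
    rw [Real.exp_le_one_iff]
    nlinarith [Real.pi_pos]
  have h7 := h _ h1
  gcongr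
  exact h7.trans (by gcongr)

/-- The integrand is holomorphic and bounded on the disc, so it has a Lipschitz primitive there,
which extends continuously to all of `ℂ`, in particular to the boundary point `s`. -/
lemma exists_primitive (s : ℝ) (x : EuclideanSpace ℝ (Fin 8)) :
    ∃ Q : ℂ → ℂ, Continuous Q ∧
      ∀ z ∈ horoball s, HasDerivAt Q (cuspIntegrand s x z) z := by
  obtain ⟨G, hG⟩ := (cuspIntegrand_differentiableOn s x).isExactOn_ball
  obtain ⟨M, hM, hb⟩ := cuspIntegrand_bound s x
  have hlip : LipschitzOnWith ⟨M, hM⟩ G (horoball s) :=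
    (convex_ball _ _).lipschitzOnWith_of_nnnorm_hasDerivWithin_le
      (fun z hz => (hG z hz).hasDerivWithinAt) (fun z hz => hb z hz)
  obtain ⟨Q, hQ, hE⟩ := hlip.extend_finite_dimension
  refine ⟨Q, hQ.continuous, fun z hz => (hG z hz).congr_of_eventuallyEq ?_⟩
  filter_upwards [Metric.isOpen_ball.mem_nhds hz] with w hw
  exact (hE hw).symm

/-- The initial point `w₁` may lie on the boundary of the disc. -/
lemma segInt_cusp {s : ℝ} {x : EuclideanSpace ℝ (Fin 8)} {Q : ℂ → ℂ} (hQc : Continuous Q)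
    (hQ : ∀ z ∈ horoball s, HasDerivAt Q (cuspIntegrand s x z) z) {w₁ w₂ : ℂ}
    (hw : ∀ t : ℝ, 0 < t → t ≤ 1 → w₁ + t * (w₂ - w₁) ∈ horoball s) :
    segInt (cuspIntegrand s x) w₁ w₂ = Q w₂ - Q w₁ := by
  obtain ⟨M, hM, hb⟩ := cuspIntegrand_bound s x
  have hint : IntervalIntegrable (fun t : ℝ => cuspIntegrand s x (w₁ + t * (w₂ - w₁)) *
      (w₂ - w₁)) volume 0 1 := by
    refine IntervalIntegrable.mul_const ?_ _
    rw [intervalIntegrable_iff_integrableOn_Ioc_of_le zero_le_one]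
    refine Integrable.of_bound ?_ M ?_
    · refine ContinuousOn.aestronglyMeasurable ?_ measurableSet_Ioc
      exact (cuspIntegrand_differentiableOn s x).continuousOn.comp
        (Continuous.continuousOn (by fun_prop)) (fun t ht => hw t ht.1 ht.2)
    · filter_upwards [ae_restrict_mem measurableSet_Ioc] with t ht
      exact hb _ (hw t ht.1 ht.2)
  have key := intervalIntegral.integral_eq_sub_of_hasDerivAt_of_le
    (f := fun t : ℝ => Q (w₁ + t * (w₂ - w₁))) zero_le_one
    (Continuous.continuousOn (by fun_prop)) (fun t ht => ?_) hint
  · rw [segInt, mul_comm, ← intervalIntegral.integral_mul_const, key]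
    simp
  · have h1 : HasDerivAt (fun t : ℝ => w₁ + t * (w₂ - w₁)) (1 * (w₂ - w₁)) t :=
      ((Complex.ofRealCLM.hasDerivAt (x := t)).mul_const (w₂ - w₁)).const_add w₁
    exact ((hQ _ (hw t ht.1 ht.2.le)).comp t h1).congr_deriv (by rw [one_mul])

/-- The weight `ψS(τ) τ⁻⁴ i` at `τ = σ + it`: the substitution `z = s - 1/τ` turns
`cuspIntegrand s x z dz` into `cuspWeight σ t * ker x z dt`. -/
noncomputable def cuspWeight (σ t : ℝ) : ℂ :=
  ψS (σ + t * I) * ((σ + t * I : ℂ) ^ 4)⁻¹ * I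

/-- The path `z = s - 1/τ` with `τ = σ + it`, which tends to the cusp `s` as `t → ∞`. -/
noncomputable def cuspPath (s σ t : ℝ) : ℂ := s + -1 / (σ + t * I)

lemma line_ne_zero (σ : ℝ) {t : ℝ} (ht : 0 < t) : (σ + t * I : ℂ) ≠ 0 := by
  intro h
  have := congrArg Complex.im h
  simp at this
  exact ht.ne' this

lemma normSq_line (σ t : ℝ) : normSq (σ + t * I : ℂ) = σ ^ 2 + t ^ 2 := by
  rw [normSq_add_mul_I]

lemma cuspPath_im (s σ t : ℝ) : (cuspPath s σ t).im = t / (σ ^ 2 + t ^ 2) := by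
  rw [cuspPath, add_im, neg_div, one_div, neg_im, inv_im, normSq_line]
  simp [neg_div]

lemma hasDerivAt_cuspPath (s σ : ℝ) {t : ℝ} (ht : 0 < t) :
    HasDerivAt (cuspPath s σ) (I / (σ + t * I) ^ 2) t := by
  have h0 := line_ne_zero σ ht
  have h1 : HasDerivAt (fun t : ℝ => (σ + t * I : ℂ)) (1 * I) t :=
    ((Complex.ofRealCLM.hasDerivAt (x := t)).mul_const I).const_add (σ : ℂ)
  have h2 := ((h1.inv h0).const_mul (-1)).const_add (s : ℂ)
  have h3 : cuspPath s σ = fun t : ℝ => (s : ℂ) + -1 * (fun t : ℝ => (σ + t * I : ℂ))⁻¹ t := by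
    ext t; simp [cuspPath, div_eq_mul_inv]
  rw [h3]
  refine h2.congr_deriv ?_
  ring

lemma continuousOn_psi_line (σ : ℝ) {c : ℝ} (hc : 1 / 2 ≤ c) :
    ContinuousOn (fun t : ℝ => ψS (σ + t * I)) (Ioi c) := by
  intro t ht
  have ht1 : c < t := ht
  have h1 : ContinuousAt ψS ((fun t : ℝ => (σ + t * I : ℂ)) t) :=
    (psi_differentiableAt (by simp; linarith)).continuousAt
  exact (ContinuousAt.comp (f := fun t : ℝ => (σ + t * I : ℂ)) h1
    (Continuous.continuousAt (by fun_prop))).continuousWithinAt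

lemma gaussData_cusp {c s σ : ℝ} (hc : 1 / 2 ≤ c) (hs : |s| ≤ 1) (hσ : |σ| ≤ 1 / 2) :
    GaussData c (cuspWeight σ) (cuspPath s σ) := by
  have hpos : ∀ t, c < t → 1 / 2 < t := fun t ht => hc.trans_lt ht
  have hσ2 : σ ^ 2 ≤ 1 / 4 := by
    have := sq_le_sq' (abs_le.1 hσ).1 (abs_le.1 hσ).2
    linarith
  have hnorm : ∀ t, c < t → 1 / 2 ≤ ‖(σ + t * I : ℂ)‖ := fun t ht => by
    have h1 := Complex.abs_im_le_norm (σ + t * I : ℂ)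
    have h2 := hpos t ht
    simp only [add_im, ofReal_im, mul_im, ofReal_re, I_im, I_re] at h1
    have := le_abs_self t
    simp at h1
    linarith
  have hzc : ContinuousOn (cuspPath s σ) (Ioi c) := fun t ht =>
    (hasDerivAt_cuspPath s σ (by linarith [hpos t ht])).continuousAt.continuousWithinAt
  refine ⟨hc, ?_, hzc, ?_, ⟨1 / 2, by norm_num, fun t ht => ?_⟩, ⟨6, by norm_num, fun t ht => ?_⟩⟩
  · refine ((continuousOn_psi_line σ hc).mul (ContinuousOn.inv₀
      (Continuous.continuousOn (by fun_prop)) fun t ht => ?_)).mul continuousOn_const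
    exact pow_ne_zero _ (line_ne_zero σ (by linarith [hpos t ht]))
  · obtain ⟨C, hC, h⟩ := psi_bound
    refine ⟨C * 16, by positivity, fun t ht => ?_⟩
    have h1 := h (σ + t * I) (by simp; linarith [hpos t ht])
    have h2 : ‖((σ + t * I : ℂ) ^ 4)⁻¹‖ ≤ 16 := by
      rw [norm_inv, norm_pow]
      calc _ ≤ ((1 / 2 : ℝ) ^ 4)⁻¹ := by
            gcongr
            exact hnorm t ht
        _ = 16 := by norm_num
    rw [cuspWeight, norm_mul, norm_mul, norm_I, mul_one]
    calc _ ≤ (C * Real.exp (-π * (σ + t * I : ℂ).im)) * 16 := by gcongr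
      _ = _ := by simp; ring
  · have h1 := hpos t ht
    rw [cuspPath_im, div_le_div_iff₀ (by linarith) (by positivity)]
    nlinarith
  · have h1 := hpos t ht
    constructor
    · have h2 : ‖cuspPath s σ t‖ ≤ 1 + 2 := by
        refine (norm_add_le _ _).trans (add_le_add (by simpa using hs) ?_)
        rw [norm_div, norm_neg, norm_one]
        calc _ ≤ 1 / (1 / 2 : ℝ) := by
              gcongr
              exact hnorm t ht
          _ = 2 := by norm_num
      linarith
    · rw [cuspPath_im, div_le_iff₀ (by positivity)]
      nlinarith [sq_nonneg σ]

lemma gaussData_line : GaussData 1 (fun t => ψS (t * I) * I) (fun t => t * I) := by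
  refine ⟨by norm_num, ?_, Continuous.continuousOn (by fun_prop), ?_,
    ⟨1, one_pos, fun t ht => ?_⟩, ⟨1, by norm_num, fun t ht => ?_⟩⟩
  · have := continuousOn_psi_line 0 (c := 1) (by norm_num)
    simp only [ofReal_zero, zero_add] at this
    exact this.mul continuousOn_const
  · obtain ⟨C, hC, h⟩ := psi_bound
    refine ⟨C, hC, fun t ht => ?_⟩
    have h1 := h (t * I) (by simp; linarith)
    simpa using h1
  · simp only [mul_im, ofReal_re, I_im, ofReal_im, I_re]
    rw [div_le_iff₀ (by linarith)]
    nlinarith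
  · have : (0 : ℝ) < t := by linarith
    simp [abs_of_pos this]

/-- The integral along the circular (or straight) path `z = s - 1/τ`, from its initial point to
the cusp `s`, is computed by the same primitive as the integrals along segments. -/
lemma gaussInt_cusp {c s σ : ℝ} (hc : 1 / 2 ≤ c) (hs : |s| ≤ 1) (hσ : |σ| ≤ 1 / 2)
    {x : EuclideanSpace ℝ (Fin 8)} {Q : ℂ → ℂ} (hQc : Continuous Q)
    (hQ : ∀ z ∈ horoball s, HasDerivAt Q (cuspIntegrand s x z) z) :
    gaussInt c (cuspWeight σ) (cuspPath s σ) x = Q s - Q (cuspPath s σ c) := by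
  have hint := (gaussData_cusp hc hs hσ).integrable 0 (r := ‖x‖ ^ 2)
    (by have : 0 ≤ ‖x‖ ^ 2 := by positivity
        linarith)
  have hlim : Tendsto (cuspPath s σ) atTop (𝓝 (s : ℂ)) := by
    have h1 : Tendsto (fun t : ℝ => ‖(σ + t * I : ℂ)‖) atTop atTop := by
      refine tendsto_atTop_mono (fun t => ?_) tendsto_id
      have h1 := Complex.abs_im_le_norm (σ + t * I : ℂ)
      simp at h1
      exact (le_abs_self t).trans h1
    have h2 := (tendsto_inv₀_cobounded (α := ℂ)).comp (tendsto_norm_atTop_iff_cobounded.1 h1)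
    have h3 := (h2.const_mul (-1)).const_add (s : ℂ)
    rw [mul_zero, add_zero] at h3
    refine h3.congr fun t => ?_
    simp [cuspPath, div_eq_mul_inv]
  refine integral_Ioi_of_hasDerivAt_of_tendsto (f := fun t => Q (cuspPath s σ t))
    ?_ (fun t ht => ?_) ?_ ((hQc.tendsto _).comp hlim)
  · exact (hQc.continuousAt.comp
      (hasDerivAt_cuspPath s σ (by linarith)).continuousAt).continuousWithinAt
  · have ht1 : c < t := ht
    have ht0 : 0 < t := by linarith
    have hne := line_ne_zero σ ht0
    have hτ : -1 / (cuspPath s σ t - s) = σ + t * I := by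
      rw [cuspPath]; field_simp; ring
    have hsub : cuspPath s σ t - s = -1 / (σ + t * I) := by rw [cuspPath]; ring
    have hmem : cuspPath s σ t ∈ horoball s := by
      rw [mem_horoball, cuspPath_im, hsub, neg_div, normSq_neg, one_div, map_inv₀, normSq_line,
        div_eq_mul_inv t]
      have : 0 < (σ ^ 2 + t ^ 2)⁻¹ := by positivity
      nlinarith
    have := (hQ _ hmem).comp t (hasDerivAt_cuspPath s σ ht0)
    refine this.congr_deriv ?_
    rw [cuspIntegrand, hτ, hsub, cuspWeight]
    field_simp
  · simpa [_root_.ker] using hint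

/-! ### Representation of `b` and action of the Fourier transform -/

/-- The contour from each cusp `s ∈ {-1, 1, 0}` to `i` is replaced by the image of a vertical ray
`τ = σ + it` under `z = s - 1/τ`; both paths lie in the disc at `s` and end in `i`. -/
lemma funB_eq_gaussInt (x : EuclideanSpace ℝ (Fin 8)) :
    funB x = -gaussInt (1 / 2) (cuspWeight (-(1 / 2))) (cuspPath (-1) (-(1 / 2))) x
      - gaussInt (1 / 2) (cuspWeight (1 / 2)) (cuspPath 1 (1 / 2)) x
      + 2 * gaussInt 1 (cuspWeight 0) (cuspPath 0 0) x
      - 2 * gaussInt 1 (fun t => ψS (t * I) * I) (fun t => t * I) x := by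
  obtain ⟨Q₁, hc₁, hQ₁⟩ := exists_primitive (-1) x
  obtain ⟨Q₂, hc₂, hQ₂⟩ := exists_primitive 1 x
  obtain ⟨Q₃, hc₃, hQ₃⟩ := exists_primitive 0 x
  have f₁ : (fun z => ψS (-1 / (z + 1)) * (z + 1) ^ 2 * _root_.ker x z) =
      cuspIntegrand (-1) x := by
    ext z; simp [cuspIntegrand]
  have f₂ : (fun z => ψS (-1 / (z - 1)) * (z - 1) ^ 2 * _root_.ker x z) =
      cuspIntegrand 1 x := by
    ext z; simp [cuspIntegrand]
  have f₃ : (fun z => ψS (-1 / z) * z ^ 2 * _root_.ker x z) = cuspIntegrand 0 x := by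
    ext z; simp [cuspIntegrand]
  have f₄ : imAxisRayInt (fun z => ψS z * _root_.ker x z) 1 =
      gaussInt 1 (fun t => ψS (t * I) * I) (fun t => t * I) x := by
    unfold imAxisRayInt gaussInt
    congr 1; ext t; ring
  have e₁ : cuspPath (-1) (-(1 / 2)) (1 / 2) = I := by
    have h := line_ne_zero (-(1 / 2)) (t := 1 / 2) (by norm_num)
    rw [cuspPath, ← eq_sub_iff_add_eq', div_eq_iff h]
    push_cast
    linear_combination (-1 / 2) * I_sq
  have e₂ : cuspPath 1 (1 / 2) (1 / 2) = I := by
    have h := line_ne_zero (1 / 2) (t := 1 / 2) (by norm_num)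
    rw [cuspPath, ← eq_sub_iff_add_eq', div_eq_iff h]
    push_cast
    linear_combination (-1 / 2) * I_sq
  have e₃ : cuspPath 0 0 1 = I := by
    simp [cuspPath]
  rw [gaussInt_cusp le_rfl (by norm_num) (by norm_num [abs_of_pos]) hc₁ hQ₁,
    gaussInt_cusp le_rfl (by norm_num) (by norm_num [abs_of_pos]) hc₂ hQ₂,
    gaussInt_cusp (by norm_num) (by norm_num) (by norm_num) hc₃ hQ₃, e₁, e₂, e₃, funB, f₁, f₂, f₃,
    f₄]
  rw [segInt_cusp hc₁ hQ₁ (fun t h0 h1 => ?_), segInt_cusp hc₁ hQ₁ (fun t h0 h1 => ?_),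
    segInt_cusp hc₂ hQ₂ (fun t h0 h1 => ?_), segInt_cusp hc₂ hQ₂ (fun t h0 h1 => ?_),
    segInt_cusp hc₃ hQ₃ (fun t h0 h1 => ?_)]
  · push_cast; ring
  all_goals
    rw [mem_horoball, normSq_apply]
    simp
    nlinarith

/-- If `τ` is on the line `Re τ = -1/2` then `-1 / (-1 - 1/τ) = 1 - 1/(τ + 1)`, and
`ψS (τ + 1) = -ψS τ` produces the sign. -/
lemma fourier_left : 𝓕 (gaussInt (1 / 2) (cuspWeight (-(1 / 2))) (cuspPath (-1) (-(1 / 2)))) =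
    -gaussInt (1 / 2) (cuspWeight (1 / 2)) (cuspPath 1 (1 / 2)) := by
  rw [(gaussData_cusp le_rfl (by norm_num) (by norm_num [abs_of_pos])).fourier]
  ext x
  simp only [gaussInt, Pi.neg_apply]
  rw [← integral_neg]
  refine setIntegral_congr_fun measurableSet_Ioi fun t ht => ?_
  have ht0 : 0 < t := lt_trans (by norm_num) ht
  have h1 := line_ne_zero (-(1 / 2)) ht0
  have h2 := line_ne_zero (1 / 2) ht0
  have h3 : (((1 / 2 : ℝ) : ℂ) + t * I) = ((-(1 / 2) : ℝ) : ℂ) + t * I + 1 := by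
    push_cast; ring
  simp only [cuspWeight, cuspPath]
  rw [h3] at h2 ⊢
  rw [psi_add_one]
  generalize ((-(1 / 2) : ℝ) : ℂ) + t * I = τ at *
  have h4 : ((-1 : ℝ) : ℂ) + -1 / τ = -(τ + 1) / τ := by push_cast; field_simp; ring
  have h5 : -1 / (-(τ + 1) / τ) = ((1 : ℝ) : ℂ) + -1 / (τ + 1) := by
    push_cast; field_simp; ring
  rw [h4, h5]
  field_simp

lemma fourier_right : 𝓕 (gaussInt (1 / 2) (cuspWeight (1 / 2)) (cuspPath 1 (1 / 2))) =
    -gaussInt (1 / 2) (cuspWeight (-(1 / 2))) (cuspPath (-1) (-(1 / 2))) := by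
  rw [(gaussData_cusp le_rfl (by norm_num) (by norm_num [abs_of_pos])).fourier]
  ext x
  simp only [gaussInt, Pi.neg_apply]
  rw [← integral_neg]
  refine setIntegral_congr_fun measurableSet_Ioi fun t ht => ?_
  have ht0 : 0 < t := lt_trans (by norm_num) ht
  have h1 := line_ne_zero (-(1 / 2)) ht0
  have h2 := line_ne_zero (1 / 2) ht0
  have h3 : (((1 / 2 : ℝ) : ℂ) + t * I) = ((-(1 / 2) : ℝ) : ℂ) + t * I + 1 := by
    push_cast; ring
  simp only [cuspWeight, cuspPath]
  rw [h3] at h2 ⊢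
  rw [psi_add_one]
  generalize ((-(1 / 2) : ℝ) : ℂ) + t * I = τ at *
  have h4 : ((1 : ℝ) : ℂ) + -1 / (τ + 1) = τ / (τ + 1) := by push_cast; field_simp; ring
  have h5 : -1 / (τ / (τ + 1)) = ((-1 : ℝ) : ℂ) + -1 / τ := by
    push_cast; field_simp; ring
  rw [h4, h5]
  field_simp

lemma fourier_center : 𝓕 (gaussInt 1 (cuspWeight 0) (cuspPath 0 0)) =
    gaussInt 1 (fun t => ψS (t * I) * I) (fun t => t * I) := by
  rw [(gaussData_cusp (by norm_num) (by norm_num) (by norm_num)).fourier]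
  ext x
  refine setIntegral_congr_fun measurableSet_Ioi fun t ht => ?_
  have ht0 : 0 < t := lt_trans (by norm_num) ht
  have h1 := line_ne_zero 0 ht0
  simp only [cuspWeight, cuspPath]
  simp only [ofReal_zero, zero_add] at h1 ⊢
  generalize (t * I : ℂ) = τ at *
  have h5 : -1 / (-1 / τ) = τ := by field_simp
  rw [h5]
  field_simp

lemma fourier_axis : 𝓕 (gaussInt 1 (fun t => ψS (t * I) * I) (fun t => t * I)) =
    gaussInt 1 (cuspWeight 0) (cuspPath 0 0) := by
  rw [gaussData_line.fourier]
  ext x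
  refine setIntegral_congr_fun measurableSet_Ioi fun t ht => ?_
  simp only [cuspWeight, cuspPath, ofReal_zero, zero_add]
  ring

end

/-- The function `b` is a radial Schwartz function on `ℝ⁸` and a `-1`-eigenfunction of the
Fourier transform: `b̂ = -b`. -/
theorem funB_schwartz_radial_eigenfunction :
    (∃ B : SchwartzMap (EuclideanSpace ℝ (Fin 8)) ℂ, ⇑B = funB) ∧
    (∀ x y : EuclideanSpace ℝ (Fin 8), ‖x‖ = ‖y‖ → funB x = funB y) ∧
    𝓕 funB = -funB := by
  obtain ⟨B₁, h₁⟩ := (gaussData_cusp (c := 1 / 2) (s := -1) (σ := -(1 / 2)) le_rfl (by norm_num)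
    (by norm_num [abs_of_pos])).schwartz
  obtain ⟨B₂, h₂⟩ := (gaussData_cusp (c := 1 / 2) (s := 1) (σ := 1 / 2) le_rfl (by norm_num)
    (by norm_num [abs_of_pos])).schwartz
  obtain ⟨B₃, h₃⟩ := (gaussData_cusp (c := 1) (s := 0) (σ := 0) (by norm_num) (by norm_num)
    (by norm_num)).schwartz
  obtain ⟨B₄, h₄⟩ := gaussData_line.schwartz
  have hB : ⇑(-B₁ - B₂ + (2 : ℂ) • B₃ - (2 : ℂ) • B₄) = funB := by
    ext x
    rw [funB_eq_gaussInt, ← h₁, ← h₂, ← h₃, ← h₄]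
    simp
  have k₁ : 𝓕 B₁ = -B₂ := DFunLike.coe_injective <| by
    rw [SchwartzMap.fourier_coe, h₁, fourier_left, ← h₂]; rfl
  have k₂ : 𝓕 B₂ = -B₁ := DFunLike.coe_injective <| by
    rw [SchwartzMap.fourier_coe, h₂, fourier_right, ← h₁]; rfl
  have k₃ : 𝓕 B₃ = B₄ := DFunLike.coe_injective <| by
    rw [SchwartzMap.fourier_coe, h₃, fourier_center, ← h₄]
  have k₄ : 𝓕 B₄ = B₃ := DFunLike.coe_injective <| by
    rw [SchwartzMap.fourier_coe, h₄, fourier_axis, ← h₃]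
  refine ⟨⟨_, hB⟩, fun x y hxy => ?_, ?_⟩
  · simp only [funB, segInt, imAxisRayInt, _root_.ker, hxy]
  · have key : 𝓕 (-B₁ - B₂ + (2 : ℂ) • B₃ - (2 : ℂ) • B₄) =
        -(-B₁ - B₂ + (2 : ℂ) • B₃ - (2 : ℂ) • B₄) := by
      simp only [← SchwartzMap.fourierTransformCLM_apply ℂ, map_sub, map_add, map_neg,
        map_smul] at k₁ k₂ k₃ k₄ ⊢
      rw [k₁, k₂, k₃, k₄]
      abel
    rw [← hB, ← SchwartzMap.fourier_coe, key]
    rfl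
end

section
/- For every real t > 0, the value φ₀(it) − (36/π²) ψ_S(it) is real and strictly positive: 0 < φ₀(it) − (36/π²) ψ_S(it). -/
/-!
On the imaginary axis `φ₀(it) ≥ 0` and `ψ_S(it) < 0`, and these two signs give the inequality.

* `φ₀_nonneg`: `E₂`, `E₄`, `E₆` have real `q`-expansion coefficients, so the numerator of `φ₀(it)`
  is the square of a real number. The denominator is `Δ = η²⁴` (from the identity
  `η²⁴ = (E₄³ - E₆²) / 1728` of level one forms), and `η(it)` is real, so `Δ(it) ≥ 0`.
* `ψS_neg`: the values `θ₀₀(it)` and `θ₁₀(it)` are sums of positive terms, and `θ₀₁(it)` is the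
  alternating version of `θ₀₀(it)`, so `|θ₀₁(it)| ≤ θ₀₀(it)`. Writing `a, b, c` for the values of
  `θ₀₀, θ₀₁, θ₁₀`, it follows that
  `(b⁴ - c⁴) / a⁸ < a⁴ / a⁸ ≤ a⁴ / b⁸ < (c⁴ + a⁴) / b⁸`.
  No relation between the three theta-nullwerte is used.
-/

open Complex

open scoped ComplexOrder

/-! ### Real values on the imaginary axis -/

lemma sigma_series_real (k : ℕ) (t : ℝ) :
    ∃ r : ℝ, ∑' n : ℕ+, (ArithmeticFunction.sigma k (n : ℕ) : ℂ) *
      Complex.exp (2 * Real.pi * I * (n : ℕ) * ((t : ℂ) * I)) = r := by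
  refine ⟨∑' n : ℕ+, (ArithmeticFunction.sigma k (n : ℕ) : ℝ) *
    Real.exp (-(2 * Real.pi * (n : ℕ) * t)), ?_⟩
  rw [Complex.ofReal_tsum]
  refine tsum_congr fun n => ?_
  push_cast
  congr 2
  linear_combination 2 * Real.pi * ((n : ℕ) : ℂ) * t * I_mul_I

lemma E₂_real (t : ℝ) : ∃ r : ℝ, E₂ ((t : ℂ) * I) = r := by
  obtain ⟨r, hr⟩ := sigma_series_real 1 t
  exact ⟨1 - 24 * r, by rw [E₂, hr]; push_cast; ring⟩

lemma E₄_real (t : ℝ) : ∃ r : ℝ, E₄ ((t : ℂ) * I) = r := by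
  obtain ⟨r, hr⟩ := sigma_series_real 3 t
  exact ⟨1 + 240 * r, by rw [E₄, hr]; push_cast; ring⟩

lemma E₆_real (t : ℝ) : ∃ r : ℝ, E₆ ((t : ℂ) * I) = r := by
  obtain ⟨r, hr⟩ := sigma_series_real 5 t
  exact ⟨1 - 504 * r, by rw [E₆, hr]; push_cast; ring⟩

/-! ### Nonnegativity of the discriminant and of `φ₀` -/

lemma E₄_eq_modularForm (z : UpperHalfPlane) : E₄ z = ModularForm.E₄ z := by
  have hB : bernoulli 4 = -1 / 30 := by
    rw [bernoulli_eq_bernoulli'_of_ne_one (by norm_num), bernoulli'_four]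
  rw [EisensteinSeries.q_expansion_bernoulli (by norm_num) (by decide), hB, E₄]
  have : ∀ n : ℕ+, Complex.exp (2 * Real.pi * I * (n : ℕ) * (z : ℂ)) =
      Complex.exp (2 * Real.pi * I * z) ^ ((n : ℕ) : ℤ) := fun n => by
    rw [zpow_natCast, ← Complex.exp_nat_mul]; ring_nf
  simp only [this]
  push_cast
  norm_num

lemma E₆_eq_modularForm (z : UpperHalfPlane) : E₆ z = ModularForm.E₆ z := by
  have hB : bernoulli 6 = 1 / 42 := by
    rw [bernoulli_eq_bernoulli'_of_ne_one (by norm_num), bernoulli'_def]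
    norm_num [Finset.sum_range_succ, Nat.choose, bernoulli'_four,
      bernoulli'_eq_zero_of_odd (show Odd 5 by decide) (by norm_num)]
  rw [EisensteinSeries.q_expansion_bernoulli (by norm_num) (by decide), hB, E₆]
  have : ∀ n : ℕ+, Complex.exp (2 * Real.pi * I * (n : ℕ) * (z : ℂ)) =
      Complex.exp (2 * Real.pi * I * z) ^ ((n : ℕ) : ℤ) := fun n => by
    rw [zpow_natCast, ← Complex.exp_nat_mul]; ring_nf
  simp only [this]
  push_cast
  norm_num

lemma Δ_eq_eta_pow (z : UpperHalfPlane) : Δ z = ModularForm.eta z ^ 24 := by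
  rw [Δ, E₄_eq_modularForm, E₆_eq_modularForm, ← ModularForm.discriminant_eq_E₄_cube_sub_E₆_sq]
  rfl

/-- The Dedekind eta function is real on the imaginary axis, since each factor of its product is
fixed by complex conjugation. -/
lemma eta_real {t : ℝ} (ht : 0 < t) : ∃ r : ℝ, ModularForm.eta ((t : ℂ) * I) = r := by
  have hq : ∀ h : ℝ, Function.Periodic.qParam h ((t : ℂ) * I) =
      (Real.exp (-(2 * Real.pi * t / h)) : ℝ) := fun h => by
    rw [Function.Periodic.qParam]
    push_cast
    congr 1
    linear_combination (2 * Real.pi * t / h : ℂ) * I_mul_I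
  have hm : Multipliable fun n : ℕ => 1 - ModularForm.eta_q n ((t : ℂ) * I) :=
    ModularForm.multipliableLocallyUniformlyOn_eta.multipliable
      (show 0 < ((t : ℂ) * I).im by simpa using ht)
  rw [← Complex.conj_eq_iff_real, ModularForm.eta, map_mul,
    hm.map_tprod (starRingEnd ℂ) Complex.continuous_conj]
  simp only [ModularForm.eta_q, hq, map_sub, map_one, map_pow, Complex.conj_ofReal]

lemma Δ_nonneg {t : ℝ} (ht : 0 < t) : ∃ d : ℝ, 0 ≤ d ∧ Δ ((t : ℂ) * I) = d := by
  obtain ⟨r, hr⟩ := eta_real ht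
  have h := Δ_eq_eta_pow ⟨(t : ℂ) * I, by simpa using ht⟩
  refine ⟨r ^ 24, by positivity, ?_⟩
  push_cast
  rw [← hr]
  exact h

lemma φ₀_nonneg {t : ℝ} (ht : 0 < t) : ∃ r : ℝ, 0 ≤ r ∧ φ₀ ((t : ℂ) * I) = r := by
  obtain ⟨a, ha⟩ := E₂_real t
  obtain ⟨b, hb⟩ := E₄_real t
  obtain ⟨c, hc⟩ := E₆_real t
  obtain ⟨d, hd, hΔ⟩ := Δ_nonneg ht
  exact ⟨(a * b - c) ^ 2 / d, by positivity, by rw [φ₀, ha, hb, hc, hΔ]; push_cast; ring⟩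

/-! ### Theta-nullwerte and negativity of `ψ_S` -/

lemma theta_exponent (t x : ℝ) :
    Complex.exp (Real.pi * I * (x : ℂ) ^ 2 * ((t : ℂ) * I)) =
      (Real.exp (-(Real.pi * x ^ 2 * t)) : ℝ) := by
  push_cast
  congr 1
  linear_combination (Real.pi * x ^ 2 * t : ℂ) * I_mul_I

/-- Completing the square turns the shifted Gaussian sum into a multiple of the two-variable
Jacobi theta series at `(st·i, t·i)`. -/
lemma summable_gaussian {t : ℝ} (ht : 0 < t) (s : ℝ) :
    Summable fun n : ℤ => Real.exp (-(Real.pi * ((n : ℝ) + s) ^ 2 * t)) := by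
  have h := ((summable_jacobiTheta₂_term_iff ((s * t : ℝ) * I) ((t : ℂ) * I)).2
    (by simpa using ht)).norm.mul_left (Real.exp (-(Real.pi * s ^ 2 * t)))
  refine h.congr fun n => ?_
  rw [norm_jacobiTheta₂_term, ← Real.exp_add]
  congr 1
  simp
  ring

lemma θ₀₀_pos_and_abs_θ₀₁_le {t : ℝ} (ht : 0 < t) : ∃ a b : ℝ, 0 < a ∧ |b| ≤ a ∧
    θ₀₀ ((t : ℂ) * I) = a ∧ θ₀₁ ((t : ℂ) * I) = b := by
  have hs : Summable fun n : ℤ => Real.exp (-(Real.pi * (n : ℝ) ^ 2 * t)) := by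
    simpa using summable_gaussian ht 0
  refine ⟨∑' n : ℤ, Real.exp (-(Real.pi * (n : ℝ) ^ 2 * t)),
    ∑' n : ℤ, (-1 : ℝ) ^ n * Real.exp (-(Real.pi * (n : ℝ) ^ 2 * t)),
    hs.tsum_pos (fun n => (Real.exp_pos _).le) 0 (Real.exp_pos _), ?_, ?_, ?_⟩
  · rw [← Real.norm_eq_abs]
    refine tsum_of_norm_bounded hs.hasSum fun n => ?_
    simp
  · rw [θ₀₀, Complex.ofReal_tsum]
    exact tsum_congr fun n => by simpa using theta_exponent t n
  · rw [θ₀₁, Complex.ofReal_tsum]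
    refine tsum_congr fun n => ?_
    have := theta_exponent t n
    rw [Complex.ofReal_mul, ← this]
    push_cast
    rfl

lemma θ₁₀_pos {t : ℝ} (ht : 0 < t) : ∃ c : ℝ, 0 < c ∧ θ₁₀ ((t : ℂ) * I) = c := by
  refine ⟨∑' n : ℤ, Real.exp (-(Real.pi * ((n : ℝ) + 1 / 2) ^ 2 * t)),
    (summable_gaussian ht (1 / 2)).tsum_pos (fun n => (Real.exp_pos _).le) 0 (Real.exp_pos _), ?_⟩
  rw [θ₁₀, Complex.ofReal_tsum]
  refine tsum_congr fun n => ?_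
  rw [← theta_exponent]
  push_cast
  rfl

lemma ψS_neg {t : ℝ} (ht : 0 < t) : ∃ r : ℝ, r < 0 ∧ ψS ((t : ℂ) * I) = r := by
  obtain ⟨a, b, ha, hba, h00, h01⟩ := θ₀₀_pos_and_abs_θ₀₁_le ht
  obtain ⟨c, hc, h10⟩ := θ₁₀_pos ht
  refine ⟨128 * ((b ^ 4 - c ^ 4) / a ^ 8 - (c ^ 4 + a ^ 4) / b ^ 8), ?_, by
    rw [ψS, h00, h01, h10]; push_cast; ring⟩
  suffices (b ^ 4 - c ^ 4) / a ^ 8 < (c ^ 4 + a ^ 4) / b ^ 8 by linarith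
  have hc4 : 0 < c ^ 4 := by positivity
  rcases eq_or_ne b 0 with rfl | hb
  -- for `b = 0` the right-hand side is `0` by the convention `x / 0 = 0`
  · have : 0 < c ^ 4 / a ^ 8 := by positivity
    simpa [neg_div] using this
  · have hb4 : 0 < b ^ 4 := by positivity
    have hab4 : b ^ 4 ≤ a ^ 4 := by
      simpa [(show Even 4 by decide).pow_abs] using pow_le_pow_left₀ (abs_nonneg b) hba 4
    have hab8 : b ^ 8 ≤ a ^ 8 := by
      simpa [(show Even 8 by decide).pow_abs] using pow_le_pow_left₀ (abs_nonneg b) hba 8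
    have hb8 : 0 < b ^ 8 := by positivity
    calc (b ^ 4 - c ^ 4) / a ^ 8 < a ^ 4 / a ^ 8 := by gcongr; linarith
      _ ≤ a ^ 4 / b ^ 8 := by gcongr
      _ < (c ^ 4 + a ^ 4) / b ^ 8 := by gcongr; linarith

/-- For every `t > 0`, the value `φ₀(it) - (36/π²) ψ_S(it)` is real and strictly positive
(in the sense of the partial order on `ℂ`). -/
theorem phi0_sub_psiS_pos (t : ℝ) (ht : 0 < t) :
    0 < φ₀ ((t : ℂ) * I) - (36 / (Real.pi : ℂ) ^ 2) * ψS ((t : ℂ) * I) := by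
  obtain ⟨p, hp, hφ⟩ := φ₀_nonneg ht
  obtain ⟨s, hs, hψ⟩ := ψS_neg ht
  have hpi : 0 < 36 / Real.pi ^ 2 := by positivity
  have key : 0 < p - 36 / Real.pi ^ 2 * s := by nlinarith
  rw [hφ, hψ]
  exact_mod_cast key
end

section
/- Jacobi's identity for theta-nullwerte: θ₀₀(z)⁴ = θ₁₀(z)⁴ + θ₀₁(z)⁴ for every z in the upper half-plane ℍ. -/
/-!
The identity follows from the duplication (Landen) formulas. With `a = θ₀₀(2z)` and `b = θ₁₀(2z)`,

* `θ₀₀(z)² = a² + b²`,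
* `θ₀₁(z)² = a² - b²`,
* `θ₁₀(z)² = 2ab`,

so that `θ₀₀(z)⁴ - θ₀₁(z)⁴ = 4a²b² = θ₁₀(z)⁴`.

Each formula comes from writing the square as an absolutely convergent sum over `(m, n) ∈ ℤ²` and
using `x² + y² = 2(((x + y)/2)² + ((x - y)/2)²)`: the rotated coordinates `m + n` and `m - n` have
the same parity, and the pairs with both even, respectively both odd, each form a copy of `ℤ²`
(`tsum_parity_split`).
-/


open Complex

/-- The pairs `(m, n) ∈ ℤ²` with `m + n` even and those with `m + n` odd, each parametrized by
`ℤ²` through half the sum and half the difference of the coordinates (rounded down). -/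
noncomputable def paritySplit : (ℤ × ℤ) ⊕ (ℤ × ℤ) ≃ ℤ × ℤ :=
  Equiv.ofBijective
    (Sum.elim (fun p => (p.1 + p.2, p.1 - p.2)) (fun p => (p.1 + p.2 + 1, p.1 - p.2))) <| by
    constructor
    · rintro (⟨a, b⟩ | ⟨a, b⟩) (⟨c, d⟩ | ⟨c, d⟩) h <;>
        simp only [Sum.elim_inl, Sum.elim_inr, Prod.mk.injEq] at h
      · rw [show a = c by omega, show b = d by omega]
      · omega
      · omega
      · rw [show a = c by omega, show b = d by omega]
    · rintro ⟨m, n⟩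
      rcases Int.even_or_odd' (m + n) with ⟨k, hk | hk⟩
      · exact ⟨Sum.inl (k, k - n), by simp; omega⟩
      · exact ⟨Sum.inr (k, k - n), by simp; omega⟩

lemma tsum_parity_split {f : ℤ × ℤ → ℂ} (hf : Summable f) :
    ∑' p, f p = ∑' p : ℤ × ℤ, f (p.1 + p.2, p.1 - p.2)
      + ∑' p : ℤ × ℤ, f (p.1 + p.2 + 1, p.1 - p.2) := by
  have h : Summable (f ∘ paritySplit) := paritySplit.summable_iff.mpr hf
  rw [← paritySplit.tsum_eq f]
  exact Summable.tsum_sum (h.comp_injective Sum.inl_injective)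
    (h.comp_injective Sum.inr_injective)

/-- The Gaussian `x ↦ e^{πix²z}`, whose sums over `ℤ` and `ℤ + 1/2` are the theta-nullwerte. -/
noncomputable def gauss (z x : ℂ) : ℂ := Complex.exp (Real.pi * I * x ^ 2 * z)

lemma gauss_mul_gauss (z s t x y : ℂ) (hx : s + t = x) (hy : s - t = y) :
    gauss z x * gauss z y = gauss (2 * z) s * gauss (2 * z) t := by
  subst hx hy
  simp only [gauss, ← Complex.exp_add]
  ring_nf

lemma summable_gauss {z : ℂ} (hz : 0 < z.im) : Summable fun n : ℤ => gauss z n := by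
  refine ((summable_jacobiTheta₂_term_iff 0 z).mpr hz).congr fun n => ?_
  simp [gauss, jacobiTheta₂_term]

lemma summable_gauss_half {z : ℂ} (hz : 0 < z.im) :
    Summable fun n : ℤ => gauss z (n + 1 / 2) := by
  refine (((summable_jacobiTheta₂_term_iff (z / 2) z).mpr hz).mul_left
    (Complex.exp (Real.pi * I * z / 4))).congr fun n => ?_
  simp only [gauss, jacobiTheta₂_term, ← Complex.exp_add]
  ring_nf

lemma summable_sign_gauss {z : ℂ} (hz : 0 < z.im) :
    Summable fun n : ℤ => (-1 : ℂ) ^ n * gauss z n := by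
  refine Summable.of_norm ((summable_gauss hz).norm.congr fun n => ?_)
  simp

lemma tsum_mul_tsum' {f g : ℤ → ℂ} (hf : Summable f) (hg : Summable g) :
    (∑' n, f n) * ∑' n, g n = ∑' p : ℤ × ℤ, f p.1 * g p.2 :=
  tsum_mul_tsum_of_summable_norm hf.norm hg.norm

lemma tsum_mul_tsum_parity {f g : ℤ → ℂ} (hf : Summable f) (hg : Summable g) :
    (∑' n, f n) * ∑' n, g n = ∑' p : ℤ × ℤ, f (p.1 + p.2) * g (p.1 - p.2)
      + ∑' p : ℤ × ℤ, f (p.1 + p.2 + 1) * g (p.1 - p.2) := by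
  rw [tsum_mul_tsum' hf hg]
  exact tsum_parity_split (summable_mul_of_summable_norm hf.norm hg.norm)

lemma two_mul_im_pos {z : ℂ} (hz : 0 < z.im) : 0 < (2 * z).im := by
  simpa using hz

lemma θ₀₀_sq {z : ℂ} (hz : 0 < z.im) : θ₀₀ z ^ 2 = θ₀₀ (2 * z) ^ 2 + θ₁₀ (2 * z) ^ 2 := by
  have h := summable_gauss hz
  have h0 := summable_gauss (two_mul_im_pos hz)
  have h1 := summable_gauss_half (two_mul_im_pos hz)
  change (∑' n : ℤ, gauss z n) ^ 2 = (∑' n : ℤ, gauss (2 * z) n) ^ 2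
    + (∑' n : ℤ, gauss (2 * z) (n + 1 / 2)) ^ 2
  rw [sq, sq, sq, tsum_mul_tsum_parity h h, tsum_mul_tsum' h0 h0, tsum_mul_tsum' h1 h1]
  congr 1 <;> refine tsum_congr fun p => gauss_mul_gauss _ _ _ _ _ ?_ ?_ <;> push_cast <;> ring

lemma θ₀₁_sq {z : ℂ} (hz : 0 < z.im) : θ₀₁ z ^ 2 = θ₀₀ (2 * z) ^ 2 - θ₁₀ (2 * z) ^ 2 := by
  have h := summable_sign_gauss hz
  have h0 := summable_gauss (two_mul_im_pos hz)
  have h1 := summable_gauss_half (two_mul_im_pos hz)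
  change (∑' n : ℤ, (-1 : ℂ) ^ n * gauss z n) ^ 2 = (∑' n : ℤ, gauss (2 * z) n) ^ 2
    - (∑' n : ℤ, gauss (2 * z) (n + 1 / 2)) ^ 2
  -- The sign `(-1)^(m + n)` is constant on each parity class.
  have sgn (m n k : ℤ) (u v : ℂ) (hk : m + n = k) :
      (-1 : ℂ) ^ m * u * ((-1 : ℂ) ^ n * v) = (-1 : ℂ) ^ k * (u * v) := by
    rw [← hk, zpow_add₀ (by norm_num)]; ring
  rw [sq, sq, sq, tsum_mul_tsum_parity h h, tsum_mul_tsum' h0 h0, tsum_mul_tsum' h1 h1,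
    sub_eq_add_neg, ← tsum_neg]
  congr 1 <;> refine tsum_congr fun p => ?_
  · rw [sgn _ _ (2 * p.1) _ _ (by ring), (even_two_mul p.1).neg_one_zpow, one_mul]
    refine gauss_mul_gauss _ _ _ _ _ ?_ ?_ <;> push_cast <;> ring
  · rw [sgn _ _ (2 * p.1 + 1) _ _ (by ring), (odd_two_mul_add_one p.1).neg_one_zpow, neg_one_mul]
    congr 1
    refine gauss_mul_gauss _ _ _ _ _ ?_ ?_ <;> push_cast <;> ring

lemma θ₁₀_sq {z : ℂ} (hz : 0 < z.im) : θ₁₀ z ^ 2 = 2 * θ₀₀ (2 * z) * θ₁₀ (2 * z) := by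
  have h := summable_gauss_half hz
  have h0 := summable_gauss (two_mul_im_pos hz)
  have h1 := summable_gauss_half (two_mul_im_pos hz)
  have h0' : Summable fun n : ℤ => gauss (2 * z) ((n + 1 : ℤ) : ℂ) :=
    (Equiv.addRight (1 : ℤ)).summable_iff.mpr h0
  have shift : ∑' n : ℤ, gauss (2 * z) ((n + 1 : ℤ) : ℂ) = ∑' n : ℤ, gauss (2 * z) n :=
    (Equiv.addRight (1 : ℤ)).tsum_eq fun n : ℤ => gauss (2 * z) n
  change (∑' n : ℤ, gauss z (n + 1 / 2)) ^ 2 = 2 * (∑' n : ℤ, gauss (2 * z) n)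
    * ∑' n : ℤ, gauss (2 * z) (n + 1 / 2)
  -- Even pairs give `b * a`; odd pairs give `a * b` after the shift `n ↦ n + 1` in `a`.
  have key : (∑' n : ℤ, gauss z (n + 1 / 2)) ^ 2 =
      (∑' n : ℤ, gauss (2 * z) (n + 1 / 2)) * (∑' n : ℤ, gauss (2 * z) n)
      + (∑' n : ℤ, gauss (2 * z) ((n + 1 : ℤ) : ℂ)) * ∑' n : ℤ, gauss (2 * z) (n + 1 / 2) := by
    rw [sq, tsum_mul_tsum_parity h h, tsum_mul_tsum' h1 h0, tsum_mul_tsum' h0' h1]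
    congr 1 <;> refine tsum_congr fun p => gauss_mul_gauss _ _ _ _ _ ?_ ?_ <;> push_cast <;> ring
  rw [key, shift]
  ring

/-- **Jacobi's identity** for theta-nullwerte: `θ₀₀⁴ = θ₁₀⁴ + θ₀₁⁴` on the upper half-plane. -/
theorem jacobi_identity (z : ℂ) (hz : 0 < z.im) :
    θ₀₀ z ^ 4 = θ₁₀ z ^ 4 + θ₀₁ z ^ 4 := by
  have fourth (x : ℂ) : x ^ 4 = (x ^ 2) ^ 2 := by ring
  rw [fourth (θ₀₀ z), fourth (θ₁₀ z), fourth (θ₀₁ z), θ₀₀_sq hz, θ₀₁_sq hz, θ₁₀_sq hz]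
  ring
end

section
/- Ramanujan's identity for E₂: D E₂ = (E₂² − E₄)/12 on the upper half-plane ℍ, where D = (1/(2πi)) d/dz is the normalized derivative. -/
/-!
Put `F = D E₂ - E₂² / 12 + E₄ / 12`. Applying `D` to the quasimodular transformation law
`E₂ ∣[2] γ = E₂ - (3 / π²) D₂(γ)` shows that the correction terms of `D E₂` and of `E₂² / 12`
cancel, so `D E₂ - E₂² / 12` is invariant in weight 4 (`slash_D_E2_sub_sq`). At `i∞` both `E₂` and
`E₄` tend to their constant term 1, while `D E₂` tends to 0 by Cauchy's estimate
(`isZeroAtImInfty_D`), so `F` vanishes there. Hence `F` is a cusp form of weight 4 and level 1;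
there are no nonzero such forms, so `F = 0`.
-/

open Complex

namespace RamanujanE2

open Filter Topology ModularGroup CongruenceSubgroup
open UpperHalfPlane hiding I
open scoped Manifold MatrixGroups ModularForm ArithmeticFunction.sigma
open Derivative (normalizedDerivOfComplex)
open EisensteinSeries (E2 D2)

lemma E₂_eq (z : ℍ) : _root_.E₂ z = E2 z := by
  rw [EisensteinSeries.E2_eq_tsum_cexp, _root_.E₂]
  congr 2
  refine tsum_congr fun n ↦ ?_
  rw [← Complex.exp_nat_mul]
  ring_nf

lemma E₄_eq (z : ℍ) : _root_.E₄ z = ModularForm.E₄ z := by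
  rw [EisensteinSeries.q_expansion_bernoulli (by norm_num) ⟨2, rfl⟩, _root_.E₄,
    bernoulli_eq_bernoulli'_of_ne_one (by norm_num : 4 ≠ 1), bernoulli'_four, sub_eq_add_neg, ← neg_mul]
  congr 2
  · norm_num
  refine tsum_congr fun n ↦ ?_
  rw [zpow_natCast, ← Complex.exp_nat_mul]
  ring_nf

/-- A function given on all of `ℍ` by a convergent `q`-expansion tends to its constant term. -/
lemma tendsto_of_hasSum_qExpansion {f : ℍ → ℂ} {c : ℕ → ℂ}
    (hf : ∀ τ : ℍ, HasSum (fun m ↦ c m • Function.Periodic.qParam 1 τ ^ m) (f τ)) :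
    Tendsto f atImInfty (𝓝 (c 0)) := by
  have hq : Tendsto (fun τ : ℍ ↦ Function.Periodic.qParam 1 (τ : ℂ)) atImInfty (𝓝 0) :=
    qParam_tendsto_atImInfty one_pos
  -- Dominated convergence: for `im τ ≥ 1` the series is dominated by its value at `τ = i`.
  have h := tendsto_tsum_of_dominated_convergence (𝓕 := atImInfty)
    (f := fun (τ : ℍ) m ↦ c m • Function.Periodic.qParam 1 (τ : ℂ) ^ m)
    (g := fun m ↦ c m • (0 : ℂ) ^ m) (hf UpperHalfPlane.I).summable.norm
    (fun m ↦ (hq.pow m).const_smul (c m)) ((atImInfty_mem _).2 ⟨1, fun τ hτ m ↦ ?_⟩)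
  · rw [tsum_eq_single 0 (fun m hm ↦ by simp [hm])] at h
    simp only [(hf _).tsum_eq, pow_zero] at h
    simpa using h
  · simp only [norm_smul, norm_pow, Function.Periodic.norm_qParam]
    gcongr ‖c m‖ * Real.exp ?_ ^ m
    have h1 : 1 ≤ τ.im := hτ
    simp only [div_one, coe_im, UpperHalfPlane.I_im]
    nlinarith [Real.pi_pos]

lemma tendsto_E2 : Tendsto E2 atImInfty (𝓝 1) := by
  have := tendsto_of_hasSum_qExpansion (f := E2)
    (c := fun m ↦ if m = 0 then 1 else -24 * ArithmeticFunction.sigma 1 m) fun τ ↦ by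
      simpa only [Function.Periodic.qParam, Complex.ofReal_one, div_one] using
        EisensteinSeries.hasSum_qExpansion_E2 (z := τ)
  simpa using this

lemma tendsto_E₄ : Tendsto ModularForm.E₄ atImInfty (𝓝 1) := by
  have := tendsto_of_hasSum_qExpansion (f := ModularForm.E₄) fun τ ↦
    ModularForm.hasSum_qExpansion ModularForm.E₄ one_pos one_mem_strictPeriods_SL τ
  rwa [EisensteinSeries.E_qExpansion_coeff_zero _ ⟨2, rfl⟩] at this

/-- If `f` is bounded by `M` high up in `ℍ`, Cauchy's estimate on the disc of radius `im z / 2`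
around `z` bounds the derivative by `2 M / im z`, which tends to 0. -/
lemma isZeroAtImInfty_D {f : ℍ → ℂ} (hf : MDiff f) (hb : IsBoundedAtImInfty f) :
    IsZeroAtImInfty (normalizedDerivOfComplex f) := by
  rw [isBoundedAtImInfty_iff] at hb
  obtain ⟨M, A, hM⟩ := hb
  have hbound : ∀ᶠ z : ℍ in atImInfty,
      ‖normalizedDerivOfComplex f z‖ ≤ ‖(2 * Real.pi * I : ℂ)⁻¹‖ * (M / (z.im / 2)) := by
    refine (atImInfty_mem _).2 ⟨2 * A, fun z hz ↦ ?_⟩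
    have hz0 := z.im_pos
    have him : ∀ w ∈ Metric.closedBall (z : ℂ) (z.im / 2), z.im / 2 ≤ w.im := by
      intro w hw
      have h1 : |(w - z).im| ≤ z.im / 2 :=
        (Complex.abs_im_le_norm _).trans (by simpa [dist_eq_norm] using hw)
      have h2 := (abs_le.1 h1).1
      simp only [Complex.sub_im, coe_im] at h2
      linarith
    have hd : DifferentiableOn ℂ (f ∘ ofComplex) (Metric.closedBall (z : ℂ) (z.im / 2)) :=
      (UpperHalfPlane.mdifferentiable_iff.1 hf).mono fun w hw ↦ by
        have := him w hw
        change 0 < w.im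
        linarith
    simp only [Set.mem_ofPred_eq, normalizedDerivOfComplex, norm_mul]
    refine mul_le_mul_of_nonneg_left ?_ (norm_nonneg _)
    refine Complex.norm_deriv_le_of_forall_mem_sphere_norm_le (by positivity)
      (hd.diffContOnCl_ball subset_rfl) fun w hw ↦ ?_
    have h1 := him w (Metric.sphere_subset_closedBall hw)
    have h2 : 0 < w.im := by linarith
    rw [Function.comp_apply, ofComplex_apply_of_im_pos h2]
    exact hM _ (by change A ≤ w.im; linarith)
  refine squeeze_zero_norm' hbound ?_
  have him : Tendsto UpperHalfPlane.im atImInfty atTop := tendsto_comap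
  simpa using ((him.atTop_div_const (two_pos)).const_div_atTop M).const_mul
    ‖(2 * Real.pi * I : ℂ)⁻¹‖

lemma hasDerivAt_D2 (γ : SL(2, ℤ)) (z : ℍ) :
    HasDerivAt (D2 γ ∘ ofComplex) (-(2 * Real.pi * I)⁻¹ * D2 γ z ^ 2) z := by
  have hz := denom_ne_zero γ z
  have hd : HasDerivAt (fun w : ℂ ↦ (γ 1 0 : ℂ) * w + γ 1 1) (γ 1 0 : ℂ) z := by
    simpa using ((hasDerivAt_id (z : ℂ)).const_mul (γ 1 0 : ℂ)).add_const (γ 1 1 : ℂ)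
  have hden : denom γ z = (γ 1 0 : ℂ) * z + γ 1 1 := by simp [ModularGroup.denom_apply]
  rw [hden] at hz
  refine ((hd.inv hz).const_mul (2 * Real.pi * I * γ 1 0)).congr_of_eventuallyEq ?_
    |>.congr_deriv ?_
  · filter_upwards [isOpen_upperHalfPlaneSet.mem_nhds z.im_pos] with w hw
    have h := ModularGroup.denom_apply γ ⟨w, hw⟩
    change denom γ w = _ at h
    rw [Function.comp_apply, ofComplex_apply_of_im_pos hw, D2, div_eq_mul_inv]
    exact congrArg (fun x : ℂ ↦ 2 * Real.pi * I * γ 1 0 * x⁻¹) h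
  · have := Complex.two_pi_I_ne_zero
    rw [D2, hden]
    field_simp

/-- The non-modular parts of `D E₂` and `E₂² / 12` agree. -/
lemma slash_D_E2_sub_sq (γ : SL(2, ℤ)) :
    (normalizedDerivOfComplex E2 - (12⁻¹ : ℂ) • (E2 * E2)) ∣[(4 : ℤ)] γ =
      normalizedDerivOfComplex E2 - (12⁻¹ : ℂ) • (E2 * E2) := by
  have hpi : (Real.pi : ℂ) ≠ 0 := by exact_mod_cast Real.pi_ne_zero
  have hc : (1 / (2 * riemannZeta 2) : ℂ) = -12 * ((2 * Real.pi * I)⁻¹) ^ 2 := by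
    rw [riemannZeta_two, inv_pow, mul_pow, I_sq]
    field_simp
    norm_num
  have hE := EisensteinSeries.E2_slash_action γ
  rw [hc] at hE
  have hsq := ModularForm.mul_slash_SL2 2 2 γ E2 E2
  have hD := Derivative.normalizedDerivOfComplex_SL_slash (k := 2) E2_mdifferentiable (γ := γ)
  rw [sub_eq_add_neg, SlashAction.add_slash, SlashAction.neg_slash, ModularForm.SL_smul_slash]
  ext z
  have hDz := congrFun hD z
  have hsqz := congrFun hsq z
  have hlhs : normalizedDerivOfComplex (E2 ∣[(2 : ℤ)] γ) z = normalizedDerivOfComplex E2 z -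
      (2 * Real.pi * I)⁻¹ * (-12 * ((2 * Real.pi * I)⁻¹) ^ 2 *
        (-(2 * Real.pi * I)⁻¹ * D2 γ z ^ 2)) := by
    rw [hE, normalizedDerivOfComplex, normalizedDerivOfComplex]
    have h1 := (mdifferentiableAt_iff.mp (E2_mdifferentiable z)).hasDerivAt
    have h2 := (hasDerivAt_D2 γ z).const_mul (-12 * ((2 * Real.pi * I : ℂ)⁻¹) ^ 2)
    have h3 := (h1.sub h2).deriv
    rw [← mul_sub, ← h3]
    rfl
  have hden : (γ 1 0 : ℂ) / denom γ z = (2 * Real.pi * I)⁻¹ * D2 γ z := by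
    have := Complex.two_pi_I_ne_zero
    rw [D2]
    field_simp
  rw [hlhs] at hDz
  simp only [Pi.sub_apply, Pi.mul_apply, hE, Pi.smul_apply, smul_eq_mul, hden,
    Int.reduceAdd] at hDz hsqz
  simp only [Pi.add_apply, Pi.neg_apply, Pi.mul_apply, Pi.smul_apply, smul_eq_mul,
    hsqz]
  push_cast at hDz
  linear_combination -hDz

lemma slash_defect (γ : SL(2, ℤ)) :
    (normalizedDerivOfComplex E2 - (12⁻¹ : ℂ) • (E2 * E2) + (12⁻¹ : ℂ) • ⇑ModularForm.E₄)
      ∣[(4 : ℤ)] γ =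
    normalizedDerivOfComplex E2 - (12⁻¹ : ℂ) • (E2 * E2) + (12⁻¹ : ℂ) • ⇑ModularForm.E₄ := by
  rw [SlashAction.add_slash, ModularForm.SL_smul_slash, slash_D_E2_sub_sq,
    show ⇑ModularForm.E₄ ∣[(4 : ℤ)] γ = ⇑ModularForm.E₄ from
      ModularForm.E₄.slash_action_eq' _ ⟨γ, rfl⟩]

/-- The defect `D E₂ - E₂² / 12 + E₄ / 12` of Ramanujan's identity, as a level 1 cusp form of
weight 4. -/
noncomputable def defect : CuspForm 𝒮ℒ 4 where
  toFun := normalizedDerivOfComplex E2 - (12⁻¹ : ℂ) • (E2 * E2) + (12⁻¹ : ℂ) • ⇑ModularForm.E₄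
  slash_action_eq' := by
    rintro _ ⟨γ, rfl⟩
    exact slash_defect γ
  holo' := by
    have hE := E2_mdifferentiable
    have hD := Derivative.normalizedDerivOfComplex_mdifferentiable hE
    exact (hD.sub ((hE.mul hE).const_smul _)).add (ModularForm.E₄.holo'.const_smul _)
  zero_at_cusps' {c} hc := by
    rw [Subgroup.IsArithmetic.isCusp_iff_isCusp_SL2Z] at hc
    rw [OnePoint.isZeroAt_iff_forall_SL2Z hc]
    intro γ _
    rw [slash_defect γ]
    have hD := isZeroAtImInfty_D E2_mdifferentiable EisensteinSeries.isBoundedAtImInfty_E2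
    have h := (Tendsto.sub hD ((tendsto_E2.mul tendsto_E2).const_mul (12⁻¹ : ℂ))).add
      (tendsto_E₄.const_mul (12⁻¹ : ℂ))
    simpa using! h

end RamanujanE2

/-- **Ramanujan's identity** for `E₂`: `D E₂ = (E₂² - E₄) / 12` on the upper half-plane,
where `D = (1/(2πi)) d/dz` is the normalized derivative. -/
theorem ramanujan_E₂ (z : ℂ) (hz : 0 < z.im) :
    deriv E₂ z / (2 * Real.pi * I) = (E₂ z ^ 2 - E₄ z) / 12 := by
  have h0 : RamanujanE2.defect = 0 :=
    rank_zero_iff_forall_zero.1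
      (CuspForm.rank_eq_zero_of_weight_lt_twelve (by norm_num)) RamanujanE2.defect
  have h1 := congrArg (fun f : CuspForm _ 4 ↦ f ⟨z, hz⟩) h0
  have h2 : deriv E₂ z = deriv (EisensteinSeries.E2 ∘ UpperHalfPlane.ofComplex) z := by
    refine Filter.EventuallyEq.deriv_eq ?_
    filter_upwards [UpperHalfPlane.isOpen_upperHalfPlaneSet.mem_nhds hz] with w hw
    rw [Function.comp_apply, UpperHalfPlane.ofComplex_apply_of_im_pos hw, ← RamanujanE2.E₂_eq]
  have h3 := RamanujanE2.E₂_eq ⟨z, hz⟩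
  have h4 := RamanujanE2.E₄_eq ⟨z, hz⟩
  change (2 * Real.pi * I)⁻¹ * deriv (EisensteinSeries.E2 ∘ UpperHalfPlane.ofComplex) z -
    12⁻¹ * (EisensteinSeries.E2 ⟨z, hz⟩ * EisensteinSeries.E2 ⟨z, hz⟩) +
    12⁻¹ * ModularForm.E₄ ⟨z, hz⟩ = 0 at h1
  rw [← h2, ← h3, ← h4] at h1
  change (2 * Real.pi * I)⁻¹ * deriv E₂ z - 12⁻¹ * (E₂ z * E₂ z) + 12⁻¹ * E₄ z = 0 at h1
  linear_combination h1
end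

section
/- Ramanujan's identity for E₄: D E₄ = (E₂E₄ − E₆)/3 on the upper half-plane ℍ, where D = (1/(2πi)) d/dz is the normalized derivative. -/
/-!
The Serre derivative `ϑ E₄ = D E₄ - (4/12) E₂ E₄` is holomorphic and invariant under the weight 6
slash action of `SL₂(ℤ)`, since the anomaly of `D E₄` cancels that of `E₂`. As `τ → i∞` one has
`E₂, E₄, E₆ → 1` and `D E₄ → 0` (writing `E₄ τ = F (q)` with `F` holomorphic at `0`,
`D E₄ = q dF/dq`), so `ϑ E₄ + E₆ / 3` vanishes at the cusp. It is thus a cusp form of weight `6`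
and level one, and there are no such forms of weight `< 12` except `0`.

The argument takes place with Mathlib's Eisenstein series on `ℍ`; `E₂_coe`, `E₄_coe` and `E₆_coe`
identify them with the `q`-series defined on `ℂ`.
-/

open Complex

open UpperHalfPlane hiding I
open Filter Topology Derivative
open scoped Manifold MatrixGroups ModularForm

local notation "𝕢" => Function.Periodic.qParam

lemma E₂_coe (τ : ℍ) : E₂ τ = EisensteinSeries.E2 τ := by
  rw [EisensteinSeries.E2_eq_tsum_cexp, E₂]
  congr 3 with n
  rw [← Complex.exp_nat_mul]
  ring_nf

/-- The factor `-2k / B_k` of the general `q`-expansion is `240` for `k = 4`. -/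
lemma E₄_coe (τ : ℍ) : E₄ τ = ModularForm.E₄ τ := by
  rw [ModularForm.E₄, EisensteinSeries.q_expansion_bernoulli _ ⟨2, rfl⟩, E₄,
    show bernoulli 4 = -1 / 30 by decide +kernel]
  have (n : ℕ+) : cexp (2 * Real.pi * I * (n : ℕ) * τ) = cexp (2 * Real.pi * I * τ) ^ (n : ℤ) := by
    rw [zpow_natCast, ← Complex.exp_nat_mul]
    ring_nf
  simp only [this]
  norm_num

/-- The factor `-2k / B_k` of the general `q`-expansion is `-504` for `k = 6`. -/
lemma E₆_coe (τ : ℍ) : E₆ τ = ModularForm.E₆ τ := by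
  rw [ModularForm.E₆, EisensteinSeries.q_expansion_bernoulli _ ⟨3, rfl⟩, E₆,
    show bernoulli 6 = 1 / 42 by decide +kernel]
  have (n : ℕ+) : cexp (2 * Real.pi * I * (n : ℕ) * τ) = cexp (2 * Real.pi * I * τ) ^ (n : ℤ) := by
    rw [zpow_natCast, ← Complex.exp_nat_mul]
    ring_nf
  simp only [this]
  norm_num

section Cusp

variable {f : ℍ → ℂ} {c : ℕ → ℂ}

lemma periodic_of_hasSum (hf : ∀ τ : ℍ, HasSum (fun m ↦ c m • 𝕢 1 τ ^ m) (f τ)) :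
    Function.Periodic (f ∘ ofComplex) (1 : ℝ) := by
  intro w
  by_cases! hw : 0 < w.im
  · have hw₁ : 0 < (w + (1 : ℝ)).im := by simpa using hw
    simp only [Function.comp_apply, ofComplex_apply_of_im_pos hw, ofComplex_apply_of_im_pos hw₁]
    refine (hf _).unique ?_
    have hq : 𝕢 1 (w + (1 : ℝ)) = 𝕢 1 w := by
      simp [Function.Periodic.qParam, mul_add, Complex.exp_add]
    simpa [← hq] using hf ⟨w, hw⟩
  · have hw₁ : (w + (1 : ℝ)).im ≤ 0 := by simpa using hw
    simp only [Function.comp_apply, ofComplex_apply_of_im_nonpos hw,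
      ofComplex_apply_of_im_nonpos hw₁]

/-- At `i∞` a convergent `q`-expansion tends to its constant term. -/
lemma tendsto_of_hasSum (hf : ∀ τ : ℍ, HasSum (fun m ↦ c m • 𝕢 1 τ ^ m) (f τ)) (hd : MDiff f) :
    Tendsto f atImInfty (𝓝 (c 0)) := by
  have hper := periodic_of_hasSum hf
  have han := analyticAt_cuspFunction_zero one_pos hper hd
    (isBoundedAtImInfty_of_hasSum_qExpansion one_pos hf)
  have h0 : cuspFunction 1 f 0 = c 0 := by
    simpa using ((hasFPowerSeriesOnBall_cuspFunction one_pos han hf).coeff_zero (fun _ ↦ 0)).symm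
  rw [← h0]
  exact (han.continuousAt.tendsto.comp (qParam_tendsto_atImInfty one_pos)).congr
    fun τ ↦ eq_cuspFunction τ one_ne_zero hper

/-- In the variable `q`, the operator `D` is `q d/dq`. -/
lemma D_eq_qParam_mul_deriv (hper : Function.Periodic (f ∘ ofComplex) (1 : ℝ)) (hd : MDiff f)
    (hb : IsBoundedAtImInfty f) (τ : ℍ) :
    normalizedDerivOfComplex f τ = 𝕢 1 τ * deriv (cuspFunction 1 f) (𝕢 1 τ) := by
  have hF := (differentiableAt_cuspFunction one_pos hper hd hb
    (Function.Periodic.norm_qParam_lt_one one_pos τ.im_pos)).hasDerivAt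
  have hq : HasDerivAt (𝕢 1) (𝕢 1 τ * (2 * Real.pi * I)) τ :=
    (((hasDerivAt_id (τ : ℂ)).const_mul (2 * Real.pi * I)).div_const ((1 : ℝ) : ℂ)).cexp
      |>.congr_deriv (by simp [Function.Periodic.qParam])
  have heq : f ∘ ofComplex =ᶠ[𝓝 (τ : ℂ)] cuspFunction 1 f ∘ 𝕢 1 := by
    filter_upwards [isOpen_upperHalfPlaneSet.mem_nhds τ.im_pos] with w hw
    simpa [ofComplex_apply_of_im_pos hw] using
      (eq_cuspFunction (⟨w, hw⟩ : ℍ) one_ne_zero hper).symm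
  rw [normalizedDerivOfComplex, heq.deriv_eq, (hF.comp (τ : ℂ) hq).deriv]
  field_simp [Complex.two_pi_I_ne_zero]

/-- The factor `q` in `D = q d/dq` forces `D f → 0` at `i∞`. -/
lemma tendsto_D_of_hasSum (hf : ∀ τ : ℍ, HasSum (fun m ↦ c m • 𝕢 1 τ ^ m) (f τ)) (hd : MDiff f) :
    Tendsto (normalizedDerivOfComplex f) atImInfty (𝓝 0) := by
  have hper := periodic_of_hasSum hf
  have hb := isBoundedAtImInfty_of_hasSum_qExpansion one_pos hf
  have hq := qParam_tendsto_atImInfty one_pos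
  have han := (analyticAt_cuspFunction_zero one_pos hper hd hb).deriv.continuousAt.tendsto
  simpa [funext (D_eq_qParam_mul_deriv hper hd hb)] using! hq.mul (han.comp hq)

end Cusp

lemma serreE₄AddE₆_slash (γ : SL(2, ℤ)) :
    (serreDerivative 4 ModularForm.E₄ + (1 / 3 : ℂ) • ⇑ModularForm.E₆) ∣[(6 : ℤ)] γ =
      serreDerivative 4 ModularForm.E₄ + (1 / 3 : ℂ) • ⇑ModularForm.E₆ := by
  have h₄ := serreDerivative_slash_invariant (k := 4) (γ := γ) ModularForm.E₄.holo'
    (ModularForm.E₄.slash_action_eq' _ ⟨γ, rfl⟩)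
  have h₆ : ⇑ModularForm.E₆ ∣[(6 : ℤ)] γ = ⇑ModularForm.E₆ :=
    ModularForm.E₆.slash_action_eq' _ ⟨γ, rfl⟩
  rw [SlashAction.add_slash, ModularForm.SL_smul_slash, h₆]
  congr 1

/-- The limit is `0 - (1/3) · 1 · 1 + 1/3 = 0`. -/
lemma serreE₄AddE₆_tendsto :
    Tendsto (serreDerivative 4 ModularForm.E₄ + (1 / 3 : ℂ) • ⇑ModularForm.E₆) atImInfty (𝓝 0) := by
  have hs₄ := hasSum_qExpansion (f := ModularForm.E₄) one_pos
    (SlashInvariantFormClass.periodic_comp_ofComplex _ one_mem_strictPeriods_SL)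
    ModularForm.E₄.holo' (ModularFormClass.bdd_at_infty _)
  have hs₆ := hasSum_qExpansion (f := ModularForm.E₆) one_pos
    (SlashInvariantFormClass.periodic_comp_ofComplex _ one_mem_strictPeriods_SL)
    ModularForm.E₆.holo' (ModularFormClass.bdd_at_infty _)
  have h₂ : Tendsto EisensteinSeries.E2 atImInfty (𝓝 1) := by
    refine tendsto_of_hasSum (c := fun m ↦ if m = 0 then 1 else -24 * ArithmeticFunction.sigma 1 m)
      (fun τ ↦ ?_) E2_mdifferentiable
    simpa only [Function.Periodic.qParam, ofReal_one, div_one] using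
      EisensteinSeries.hasSum_qExpansion_E2 (z := τ)
  have h₄ := tendsto_of_hasSum hs₄ ModularForm.E₄.holo'
  have h₆ := tendsto_of_hasSum hs₆ ModularForm.E₆.holo'
  have hD := tendsto_D_of_hasSum hs₄ ModularForm.E₄.holo'
  rw [EisensteinSeries.E_qExpansion_coeff_zero _ ⟨2, rfl⟩] at h₄
  rw [EisensteinSeries.E_qExpansion_coeff_zero _ ⟨3, rfl⟩] at h₆
  have := (hD.sub ((h₂.const_mul (4 * 12⁻¹)).mul h₄)).add (h₆.const_mul (1 / 3))
  norm_num at this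
  refine this.congr fun τ ↦ ?_
  simp
  norm_num

/-- `ϑ E₄ + E₆ / 3` as a cusp form of weight `6`. -/
noncomputable def serreE₄AddE₆ : CuspForm 𝒮ℒ 6 where
  toFun := serreDerivative 4 ModularForm.E₄ + (1 / 3 : ℂ) • ⇑ModularForm.E₆
  slash_action_eq' := fun _ ⟨γ, hγ⟩ ↦ hγ ▸ serreE₄AddE₆_slash γ
  holo' := (serreDerivative_mdifferentiable 4 ModularForm.E₄.holo').add
    (ModularForm.E₆.holo'.const_smul _)
  zero_at_cusps' := by
    intro c hc
    rw [Subgroup.IsArithmetic.isCusp_iff_isCusp_SL2Z] at hc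
    rw [OnePoint.isZeroAt_iff_forall_SL2Z hc]
    intro γ _
    rw [serreE₄AddE₆_slash γ]
    exact serreE₄AddE₆_tendsto

/-- **Ramanujan's identity** for `E₄`: `D E₄ = (E₂E₄ - E₆) / 3` on the upper half-plane,
where `D = (1/(2πi)) d/dz` is the normalized derivative. -/
theorem ramanujan_E₄ (z : ℂ) (hz : 0 < z.im) :
    deriv E₄ z / (2 * Real.pi * I) = (E₂ z * E₄ z - E₆ z) / 3 := by
  lift z to ℍ using hz
  have h0 : serreE₄AddE₆ = 0 :=
    rank_zero_iff_forall_zero.mp (CuspForm.rank_eq_zero_of_weight_lt_twelve (by norm_num)) _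
  have h : normalizedDerivOfComplex ModularForm.E₄ z -
      4 * 12⁻¹ * EisensteinSeries.E2 z * ModularForm.E₄ z + 1 / 3 * ModularForm.E₆ z = 0 :=
    DFunLike.congr_fun h0 z
  have hderiv : deriv E₄ z = deriv (ModularForm.E₄ ∘ ofComplex) z := by
    refine EventuallyEq.deriv_eq ?_
    filter_upwards [isOpen_upperHalfPlaneSet.mem_nhds z.im_pos] with w hw
    simpa [ofComplex_apply_of_im_pos hw] using E₄_coe ⟨w, hw⟩
  rw [normalizedDerivOfComplex, ← hderiv, ← E₂_coe, ← E₄_coe, ← E₆_coe] at h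
  rw [div_eq_inv_mul]
  linear_combination h
end

section
/- Ramanujan's identity for E₆: D E₆ = (E₂E₆ − E₄²)/2 on the upper half-plane ℍ, where D = (1/(2πi)) d/dz is the normalized derivative. -/
open Complex

namespace RamanujanE₆

open UpperHalfPlane hiding I
open Filter Topology Derivative
open scoped Manifold MatrixGroups ModularForm

/-- A function on `ℍ` given by a power series in `q` tends to the constant term at `i∞`: the
difference is `q` times another convergent power series in `q`, which is bounded at `i∞`. -/
lemma tendsto_coeff_zero_of_hasSum {f : ℍ → ℂ} {c : ℕ → ℂ}
    (hf : ∀ τ : ℍ, HasSum (fun m ↦ c m • Function.Periodic.qParam 1 τ ^ m) (f τ)) :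
    Tendsto f atImInfty (𝓝 (c 0)) := by
  have hg : ∀ τ : ℍ, HasSum (fun m ↦ c (m + 1) • Function.Periodic.qParam 1 τ ^ m)
      ((f τ - c 0) / Function.Periodic.qParam 1 τ) := by
    intro τ
    have hq : Function.Periodic.qParam 1 (τ : ℂ) ≠ 0 := Function.Periodic.qParam_ne_zero _
    have h := ((hasSum_nat_add_iff' 1).mpr (hf τ)).div_const (Function.Periodic.qParam 1 (τ : ℂ))
    simp only [Finset.range_one, Finset.sum_singleton, pow_zero, smul_eq_mul, mul_one] at h
    convert! h using 2 with m
    rw [smul_eq_mul, pow_succ]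
    field_simp
  have hb := isBoundedAtImInfty_of_hasSum_qExpansion one_pos hg
  have hlim := (qParam_tendsto_atImInfty one_pos).zero_mul_isBoundedUnder_le
    (hb.isBoundedUnder_le)
  have := hlim.add_const (c 0)
  rw [zero_add] at this
  refine this.congr fun τ ↦ ?_
  have hq : Function.Periodic.qParam 1 (τ : ℂ) ≠ 0 := Function.Periodic.qParam_ne_zero _
  field_simp
  ring

lemma tendsto_E2 : Tendsto EisensteinSeries.E2 atImInfty (𝓝 1) := by
  have := tendsto_coeff_zero_of_hasSum (f := EisensteinSeries.E2) (fun τ ↦ by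
    simpa only [Function.Periodic.qParam, ofReal_one, div_one] using
      EisensteinSeries.hasSum_qExpansion_E2 (z := τ))
  simpa using this

lemma tendsto_E {k : ℕ} (hk : 3 ≤ k) (hk2 : Even k) :
    Tendsto (ModularForm.E hk) atImInfty (𝓝 1) := by
  rw [← EisensteinSeries.E_qExpansion_coeff_zero hk hk2]
  exact tendsto_coeff_zero_of_hasSum fun τ ↦
    ModularForm.hasSum_qExpansion (ModularForm.E hk) one_pos one_mem_strictPeriods_SL τ

/-- If `f = F(q)` is a modular form of level one, then `D f = q F'(q)` vanishes at `i∞`. -/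
lemma tendsto_D {k : ℤ} (f : ModularForm 𝒮ℒ k) :
    Tendsto (normalizedDerivOfComplex f) atImInfty (𝓝 0) := by
  have hper := SlashInvariantFormClass.periodic_comp_ofComplex f one_mem_strictPeriods_SL
  have han := ModularFormClass.analyticAt_cuspFunction_zero f one_pos one_mem_strictPeriods_SL
  have hq := qParam_tendsto_atImInfty one_pos
  have hlim : Tendsto (fun τ : ℍ ↦ Function.Periodic.qParam 1 (τ : ℂ) *
      deriv (cuspFunction 1 f) (Function.Periodic.qParam 1 (τ : ℂ))) atImInfty (𝓝 0) := by
    simpa using hq.mul (han.deriv.continuousAt.tendsto.comp hq)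
  refine hlim.congr fun τ ↦ ?_
  have hF : DifferentiableAt ℂ (cuspFunction 1 f) (Function.Periodic.qParam 1 (τ : ℂ)) :=
    ModularFormClass.differentiableAt_cuspFunction f one_pos one_mem_strictPeriods_SL
      (Function.Periodic.norm_qParam_lt_one one_pos τ.im_pos)
  have hcomp : (⇑f ∘ ofComplex) = cuspFunction 1 f ∘ Function.Periodic.qParam 1 := by
    ext w
    exact (Function.Periodic.eq_cuspFunction one_ne_zero hper w).symm
  have hdq : HasDerivAt (Function.Periodic.qParam 1)
      (Function.Periodic.qParam 1 (τ : ℂ) * (2 * Real.pi * I)) (τ : ℂ) := by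
    have := ((hasDerivAt_id (τ : ℂ)).const_mul (2 * (Real.pi : ℂ) * I)).cexp
    have hfun : Function.Periodic.qParam 1 = fun w ↦ cexp (2 * Real.pi * I * w) := by
      ext w
      simp [Function.Periodic.qParam]
    rw [hfun]
    simpa using this
  rw [normalizedDerivOfComplex, hcomp, (hF.hasDerivAt.comp (τ : ℂ) hdq).deriv]
  have := two_pi_I_ne_zero
  field_simp

lemma serreForm_slash (γ : SL(2, ℤ)) :
    (fun z ↦ serreDerivative 6 ModularForm.E₆ z + 2⁻¹ * ModularForm.E₄ z ^ 2) ∣[(8 : ℤ)] γ =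
      fun z ↦ serreDerivative 6 ModularForm.E₆ z + 2⁻¹ * ModularForm.E₄ z ^ 2 := by
  have h4 : ⇑ModularForm.E₄ ∣[(4 : ℤ)] γ = ⇑ModularForm.E₄ :=
    SlashInvariantForm.slash_action_eqn ModularForm.E₄ _ (MonoidHom.mem_range.mpr ⟨γ, rfl⟩)
  have h6 : ⇑ModularForm.E₆ ∣[(6 : ℤ)] γ = ⇑ModularForm.E₆ :=
    SlashInvariantForm.slash_action_eqn ModularForm.E₆ _ (MonoidHom.mem_range.mpr ⟨γ, rfl⟩)
  have hs := serreDerivative_slash_invariant (ModularFormClass.holo ModularForm.E₆) h6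
  have hm := ModularForm.mul_slash_SL2 4 4 γ ModularForm.E₄ ModularForm.E₄
  rw [h4] at hm
  have hf : (fun z ↦ serreDerivative 6 ModularForm.E₆ z + 2⁻¹ * ModularForm.E₄ z ^ 2) =
      serreDerivative ((6 : ℤ) : ℂ) ModularForm.E₆ +
        (2⁻¹ : ℂ) • (⇑ModularForm.E₄ * ⇑ModularForm.E₄) := by
    ext z
    simp [sq]
  rw [hf, SlashAction.add_slash, ModularForm.SL_smul_slash]
  congr 1
  exact congrArg _ hm

lemma tendsto_serreForm :
    Tendsto (fun z ↦ serreDerivative 6 ModularForm.E₆ z + 2⁻¹ * ModularForm.E₄ z ^ 2)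
      atImInfty (𝓝 0) := by
  have h4 := tendsto_E (k := 4) (by norm_num) ⟨2, rfl⟩
  have h6 := tendsto_E (k := 6) (by norm_num) ⟨3, rfl⟩
  have h := ((tendsto_D ModularForm.E₆).sub ((tendsto_E2.const_mul (6 * 12⁻¹)).mul h6)).add
    ((h4.pow 2).const_mul 2⁻¹)
  norm_num at h
  refine h.congr fun z ↦ ?_
  simp only [serreDerivative_apply]
  norm_num

/-- `∂₆ E₆ + E₄² / 2` as a cusp form of weight `8`. -/
noncomputable def serreCuspForm : CuspForm 𝒮ℒ 8 where
  toFun z := serreDerivative 6 ModularForm.E₆ z + 2⁻¹ * ModularForm.E₄ z ^ 2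
  slash_action_eq' := by
    rintro _ ⟨γ, rfl⟩
    exact serreForm_slash γ
  holo' := (serreDerivative_mdifferentiable 6 (ModularFormClass.holo ModularForm.E₆)).add
    (mdifferentiable_const.mul ((ModularFormClass.holo ModularForm.E₄).pow 2))
  zero_at_cusps' {c} hc := by
    obtain ⟨γ, rfl⟩ := isCusp_SL2Z_iff'.mp hc
    refine (OnePoint.isZeroAt_iff rfl).mpr ?_
    have h := serreForm_slash γ
    rw [ModularForm.SL_slash] at h
    exact h.symm ▸ tendsto_serreForm

lemma coe_E₂ (τ : ℍ) : E₂ τ = EisensteinSeries.E2 τ := by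
  rw [E₂, EisensteinSeries.E2_eq_tsum_cexp]
  simp only [← Complex.exp_nat_mul]
  congr! 6
  ring

lemma coe_E₄ (τ : ℍ) : E₄ τ = ModularForm.E₄ τ := by
  rw [E₄, EisensteinSeries.q_expansion_bernoulli _ ⟨2, rfl⟩]
  simp only [zpow_natCast, ← Complex.exp_nat_mul]
  rw [show bernoulli 4 = -1 / 30 by decide +kernel]
  norm_num
  congr! 4
  ring_nf

lemma coe_E₆ (τ : ℍ) : E₆ τ = ModularForm.E₆ τ := by
  rw [E₆, EisensteinSeries.q_expansion_bernoulli _ ⟨3, rfl⟩]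
  simp only [zpow_natCast, ← Complex.exp_nat_mul]
  rw [show bernoulli 6 = 1 / 42 by decide +kernel]
  norm_num
  congr! 4
  ring_nf

/-- Ramanujan's identity for Mathlib's Eisenstein series on `ℍ`. -/
lemma D_E₆ (τ : ℍ) : normalizedDerivOfComplex ModularForm.E₆ τ =
    (EisensteinSeries.E2 τ * ModularForm.E₆ τ - ModularForm.E₄ τ ^ 2) / 2 := by
  have h0 : serreCuspForm = 0 := rank_zero_iff_forall_zero.mp
    (CuspForm.rank_eq_zero_of_weight_lt_twelve (by norm_num)) serreCuspForm
  have h : serreDerivative 6 ModularForm.E₆ τ + 2⁻¹ * ModularForm.E₄ τ ^ 2 = 0 :=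
    DFunLike.congr_fun h0 τ
  rw [serreDerivative_apply] at h
  linear_combination h

end RamanujanE₆

/-- **Ramanujan's identity** for `E₆`: `D E₆ = (E₂E₆ - E₄²) / 2` on the upper half-plane,
where `D = (1/(2πi)) d/dz` is the normalized derivative. -/
theorem ramanujan_E₆ (z : ℂ) (hz : 0 < z.im) :
    deriv E₆ z / (2 * Real.pi * I) = (E₂ z * E₆ z - E₄ z ^ 2) / 2 := by
  have h := RamanujanE₆.D_E₆ ⟨z, hz⟩
  rw [← RamanujanE₆.coe_E₂, ← RamanujanE₆.coe_E₄, ← RamanujanE₆.coe_E₆] at h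
  have hE : E₆ =ᶠ[nhds z] ModularForm.E₆ ∘ UpperHalfPlane.ofComplex := by
    filter_upwards [UpperHalfPlane.isOpen_upperHalfPlaneSet.mem_nhds hz] with w hw
    rw [Function.comp_apply, UpperHalfPlane.ofComplex_apply_of_im_pos hw,
      ← RamanujanE₆.coe_E₆]
  rw [hE.deriv_eq, div_eq_inv_mul]
  exact h
end

section
/- Cauchy–Goursat theorem for unbounded rectangular contours: let a < b and c be real numbers, and let f be a complex function that is holomorphic on an open set containing the closed unbounded rectangle {z ∈ ℂ : a ≤ Re z ≤ b, Im z ≥ c}. Suppose the integrals of f along the two vertical rays {Re z = a, Im z ≥ c} and {Re z = b, Im z ≥ c} converge, and that the integral of f along the horizontal segment from a + iT to b + iT tends to 0 as T → ∞. Then ∫ along the vertical ray from a + ic to a + i∞ of f equals ∫ of f along the segment from a + ic to b + ic plus ∫ along the vertical ray from b + ic to b + i∞ of f; equivalently, the integral of f around the boundary of the unbounded rectangle is zero. -/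
open Complex MeasureTheory

/-!
The classical Cauchy–Goursat theorem on the bounded rectangle `[a, b] × [c, T]` relates the four
edge integrals (`Complex.integral_boundary_rect_eq_zero_of_differentiableOn`). Letting `T → ∞`, the
vertical integrals converge to the integrals over the rays
(`MeasureTheory.intervalIntegral_tendsto_integral_Ioi`) and the top edge vanishes by hypothesis, so
the identity follows from uniqueness of limits.
-/

/-- **Cauchy–Goursat for unbounded rectangular contours**: if `f` is holomorphic on an open
set containing the closed unbounded rectangle `{a ≤ Re z ≤ b, Im z ≥ c}`, the integrals along
the two vertical rays converge, and the integral along the horizontal segment at height `T`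
tends to `0` as `T → ∞`, then the integral up the left ray equals the integral along the
bottom edge plus the integral up the right ray. -/
theorem unbounded_rectangle_cauchy_goursat (a b c : ℝ) (hab : a < b) (f : ℂ → ℂ)
    (U : Set ℂ) (hU : IsOpen U)
    (hUsub : {z : ℂ | a ≤ z.re ∧ z.re ≤ b ∧ c ≤ z.im} ⊆ U)
    (hf : DifferentiableOn ℂ f U)
    (hint_a : IntegrableOn (fun t : ℝ => f ((a : ℂ) + t * I)) (Set.Ioi c))
    (hint_b : IntegrableOn (fun t : ℝ => f ((b : ℂ) + t * I)) (Set.Ioi c))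
    (htop : Filter.Tendsto (fun T : ℝ => ∫ x : ℝ in a..b, f ((x : ℂ) + T * I))
      Filter.atTop (nhds 0)) :
    (∫ t : ℝ in Set.Ioi c, f ((a : ℂ) + t * I) * I) =
      (∫ x : ℝ in a..b, f ((x : ℂ) + c * I)) +
        ∫ t : ℝ in Set.Ioi c, f ((b : ℂ) + t * I) * I := by
  have hA := intervalIntegral_tendsto_integral_Ioi c hint_a Filter.tendsto_id
  have hB := intervalIntegral_tendsto_integral_Ioi c hint_b Filter.tendsto_id
  have hlim := ((htop.const_sub (∫ x : ℝ in a..b, f ((x : ℂ) + c * I))).add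
    (hB.const_mul I)).sub (hA.const_mul I)
  have hzero : ∀ᶠ T : ℝ in Filter.atTop,
      (∫ x : ℝ in a..b, f ((x : ℂ) + c * I)) - (∫ x : ℝ in a..b, f ((x : ℂ) + T * I)) +
        I * (∫ t : ℝ in c..id T, f ((b : ℂ) + t * I)) -
        I * (∫ t : ℝ in c..id T, f ((a : ℂ) + t * I)) = 0 := by
    filter_upwards [Filter.eventually_ge_atTop c] with T hT
    have hrect := integral_boundary_rect_eq_zero_of_differentiableOn f ⟨a, c⟩ ⟨b, T⟩ <|
      hf.mono fun z hz => hUsub <| by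
        rw [mem_reProdIm, Set.uIcc_of_le hab.le, Set.uIcc_of_le hT] at hz
        exact ⟨hz.1.1, hz.1.2, hz.2.1⟩
    simpa only [smul_eq_mul, id] using hrect
  have h0 := tendsto_nhds_unique (hlim.congr' hzero) tendsto_const_nhds
  rw [integral_mul_const, integral_mul_const]
  linear_combination -h0
end
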